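/- arXiv:1210.6917 — 2 statements merged into one kernel-verified Lean document; each statement's English description precedes it below -/
import Mathlib

section
/- Let α ∈ (0,1] and let A ⊆ F_2^n satisfy |A| ≥ α·2^n. Then for every real ε > 0, every positive integer t, and every nonempty set B ⊆ F_2^n there exists a linear subspace V of F_2^n with codimension codim(V) = n − dim(V) ≤ 32·log(2/α^t) such that: for every v ∈ V, every nonempty subset S ⊆ F_2^n, every real η > 0, and every positive integer ℓ, Pr_{y∈S}[ |ρ_{A→B}(y) − ρ_{A→B}(y + v)| ≤ ε' ] ≥ 1 − 16·(ℓ/η)·(|A+B|/|S|)·exp(−2ε²t), where ε' = 4εℓ + 2η + 2^{−ℓ}·√(|B|/|A|). -/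
open scoped Classical Pointwise

/-- The measure of additive containment: `ρ_{A→B}(y) = |{a ∈ A : y + a ∈ B}| / |A|`. -/
noncomputable def rhoMeas {n : ℕ} (A B : Finset (Fin n → ZMod 2)) (y : Fin n → ZMod 2) : ℝ :=
  ((A.filter fun a => y + a ∈ B).card : ℝ) / A.card

/-- `Pr_{y ∈ S}[P y] = |{y ∈ S : P y}| / |S|`. -/
noncomputable def prOver {n : ℕ} (S : Finset (Fin n → ZMod 2))
    (P : (Fin n → ZMod 2) → Prop) : ℝ :=
  ((S.filter fun y => P y).card : ℝ) / S.card

lemma ap_hoeff (p s : ℝ) (hp0 : 0 ≤ p) (hp1 : p ≤ 1) :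
    p * Real.exp (s * (1 - p)) + (1 - p) * Real.exp (s * (0 - p)) ≤ Real.exp (s ^ 2 / 8) := by
  let μ : MeasureTheory.Measure Bool :=
    ENNReal.ofReal p • MeasureTheory.Measure.dirac true +
      ENNReal.ofReal (1 - p) • MeasureTheory.Measure.dirac false
  have hμ : MeasureTheory.IsProbabilityMeasure μ := by
    constructor
    simp only [μ, MeasureTheory.Measure.add_apply, MeasureTheory.Measure.smul_apply,
      MeasureTheory.measure_univ, smul_eq_mul, mul_one]
    rw [← ENNReal.ofReal_add hp0 (by linarith)]
    simp
  have hint : ∀ f : Bool → ℝ, ∫ b, f b ∂μ = p * f true + (1 - p) * f false := by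
    intro f
    simp only [μ]
    have i1 : MeasureTheory.IsFiniteMeasure
        (ENNReal.ofReal p • MeasureTheory.Measure.dirac true) :=
      MeasureTheory.Measure.smul_finite _ ENNReal.ofReal_ne_top
    have i2 : MeasureTheory.IsFiniteMeasure
        (ENNReal.ofReal (1 - p) • MeasureTheory.Measure.dirac false) :=
      MeasureTheory.Measure.smul_finite _ ENNReal.ofReal_ne_top
    rw [MeasureTheory.integral_add_measure (MeasureTheory.Integrable.of_finite)
      (MeasureTheory.Integrable.of_finite), MeasureTheory.integral_smul_measure,
      MeasureTheory.integral_smul_measure, MeasureTheory.integral_dirac,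
      MeasureTheory.integral_dirac, ENNReal.toReal_ofReal hp0,
      ENNReal.toReal_ofReal (by linarith)]
    simp
  let X : Bool → ℝ := fun b => if b then 1 else 0
  have h := ProbabilityTheory.hasSubgaussianMGF_of_mem_Icc (μ := μ) (X := X) (a := 0) (b := 1)
    (measurable_of_finite X).aemeasurable
    (Filter.Eventually.of_forall (by intro b; cases b <;> simp [X]))
  have h2 := h.mgf_le s
  simp only [ProbabilityTheory.mgf, hint] at h2
  simp only [X] at h2
  norm_num at h2
  convert h2 using 2
  · ring_nf
  · ring

section F
variable {n : ℕ}

/-- character -/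
noncomputable def apChi (g x : Fin n → ZMod 2) : ℝ := if g ⬝ᵥ x = 0 then 1 else -1

lemma apChi_comm (g x : Fin n → ZMod 2) : apChi g x = apChi x g := by
  simp only [apChi, dotProduct_comm]

lemma apChi_add (g x y : Fin n → ZMod 2) : apChi g (x + y) = apChi g x * apChi g y := by
  simp only [apChi, dotProduct_add]
  generalize g ⬝ᵥ x = a
  generalize g ⬝ᵥ y = b
  have h11 : (1 : ZMod 2) + 1 = 0 := by decide
  have h01 : ∀ a : ZMod 2, a = 0 ∨ a = 1 := by decide
  rcases h01 a with rfl | rfl <;> rcases h01 b with rfl | rfl <;> simp [h11]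

lemma apChi_zero (g : Fin n → ZMod 2) : apChi g 0 = 1 := by simp [apChi]

lemma apChi_zero_left (g : Fin n → ZMod 2) : apChi 0 g = 1 := by simp [apChi]

lemma apChi_add_left (g x y : Fin n → ZMod 2) : apChi (x + y) g = apChi x g * apChi y g := by
  rw [apChi_comm, apChi_add, apChi_comm g x, apChi_comm g y]

lemma apChi_sum (T : Finset (Fin n → ZMod 2)) (x : Fin n → ZMod 2) :
    apChi (∑ g ∈ T, g) x = ∏ g ∈ T, apChi g x := by
  induction T using Finset.induction_on with
  | empty => simp [apChi_zero_left]
  | insert a s ha ih => rw [Finset.sum_insert ha, Finset.prod_insert ha, apChi_add_left, ih]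

lemma apChi_abs (g x : Fin n → ZMod 2) : |apChi g x| = 1 := by
  unfold apChi; split_ifs <;> simp

lemma apChi_sq (g x : Fin n → ZMod 2) : apChi g x * apChi g x = 1 := by
  unfold apChi; split_ifs <;> simp

lemma ap_char2 (x : Fin n → ZMod 2) : x + x = 0 := by
  funext i; exact CharTwo.add_self_eq_zero (x i)

lemma ap_add_eq_zero (x y : Fin n → ZMod 2) : x + y = 0 ↔ x = y := by
  constructor
  · intro h
    have : x + y + y = y := by rw [h, zero_add]
    rwa [add_assoc, ap_char2, add_zero] at this
  · rintro rfl; exact ap_char2 x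

lemma ap_shift (f : (Fin n → ZMod 2) → ℝ) (x : Fin n → ZMod 2) :
    ∑ y, f (y + x) = ∑ y, f y :=
  Fintype.sum_equiv (Equiv.addRight x) _ _ (fun _ => rfl)

lemma apChi_sum_ne (g : Fin n → ZMod 2) (hg : g ≠ 0) : ∑ x, apChi g x = 0 := by
  obtain ⟨i, hi⟩ : ∃ i, g i ≠ 0 := by
    by_contra h; push Not at h; exact hg (funext h)
  have h1 : apChi g (Pi.single i 1) = -1 := by
    simp [apChi, hi]
  have h2 := ap_shift (apChi g) (Pi.single i 1)
  simp only [apChi_add, h1] at h2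
  rw [← Finset.sum_mul] at h2
  linarith

lemma ap_cardG : (Fintype.card (Fin n → ZMod 2) : ℝ) = 2 ^ n := by
  simp [ZMod.card]

lemma apChi_orth (g : Fin n → ZMod 2) : ∑ x, apChi g x = if g = 0 then (2 : ℝ) ^ n else 0 := by
  split_ifs with h
  · subst h; simp [apChi_zero_left, ZMod.card]
  · exact apChi_sum_ne g h

lemma apChi_orth' (x : Fin n → ZMod 2) : ∑ g, apChi g x = if x = 0 then (2 : ℝ) ^ n else 0 := by
  simp_rw [apChi_comm _ x]; exact apChi_orth x

/-- transform -/
noncomputable def apHat (A : Finset (Fin n → ZMod 2)) (g : Fin n → ZMod 2) : ℝ :=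
  ∑ a ∈ A, apChi g a

lemma apHat_parseval (A : Finset (Fin n → ZMod 2)) :
    ∑ g, apHat A g ^ 2 = 2 ^ n * A.card := by
  have : ∀ g, apHat A g ^ 2 = ∑ a ∈ A, ∑ b ∈ A, apChi g (a + b) := by
    intro g
    rw [sq, apHat, Finset.sum_mul_sum]
    simp only [apChi_add]
  simp_rw [this]
  rw [Finset.sum_comm]
  have : ∀ a ∈ A, ∑ g, ∑ b ∈ A, apChi g (a + b) = 2 ^ n := by
    intro a ha
    rw [Finset.sum_comm]
    simp only [apChi_orth', ap_add_eq_zero]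
    simp [ha]
  rw [Finset.sum_congr rfl this]
  simp [mul_comm]

lemma ap_inv (B : Finset (Fin n → ZMod 2)) (y : Fin n → ZMod 2) :
    ∑ g, apHat B g * apChi g y = if y ∈ B then (2 : ℝ) ^ n else 0 := by
  simp only [apHat, Finset.sum_mul, ← apChi_add]
  rw [Finset.sum_comm]
  simp only [apChi_orth', ap_add_eq_zero]
  simp

lemma ap_rho_fourier (A B : Finset (Fin n → ZMod 2)) (y : Fin n → ZMod 2) :
    rhoMeas A B y = ∑ g, (apHat A g * apHat B g / (2 ^ n * A.card)) * apChi g y := by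
  have h : ∑ g, apHat A g * apHat B g * apChi g y
      = 2 ^ n * ((A.filter fun a => y + a ∈ B).card : ℝ) := by
    have : ∀ g, apHat A g * apHat B g * apChi g y =
        ∑ a ∈ A, apHat B g * apChi g (y + a) := by
      intro g
      rw [apHat, Finset.sum_mul, Finset.sum_mul]
      refine Finset.sum_congr rfl fun a _ => ?_
      rw [apChi_add]; ring
    simp_rw [this]
    rw [Finset.sum_comm]
    simp_rw [ap_inv]
    rw [← Finset.sum_filter]
    simp [mul_comm]
  have h2 : (2 : ℝ) ^ n ≠ 0 := by positivity
  rw [rhoMeas]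
  calc _ = (2 ^ n * ((A.filter fun a => y + a ∈ B).card : ℝ)) / (2 ^ n * A.card) := by
        rw [mul_div_mul_left _ _ h2]
    _ = _ := by
        rw [← h, Finset.sum_div]
        exact Finset.sum_congr rfl fun g _ => by ring

/-- averaging -/
noncomputable def apT (X : Finset (Fin n → ZMod 2)) (f : (Fin n → ZMod 2) → ℝ)
    (y : Fin n → ZMod 2) : ℝ := (∑ x ∈ X, f (y + x)) / X.card

lemma apT_fourier (X : Finset (Fin n → ZMod 2)) (c : (Fin n → ZMod 2) → ℝ) :
    apT X (fun y => ∑ g, c g * apChi g y) =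
      fun y => ∑ g, (c g * (apHat X g / X.card)) * apChi g y := by
  funext y
  simp only [apT]
  rw [Finset.sum_comm, Finset.sum_div]
  refine Finset.sum_congr rfl fun g _ => ?_
  simp only [apChi_add, apHat]
  rw [← Finset.mul_sum, ← Finset.mul_sum]
  ring

lemma apT_iter_fourier (X : Finset (Fin n → ZMod 2)) (c : (Fin n → ZMod 2) → ℝ) (k : ℕ) :
    (apT X)^[k] (fun y => ∑ g, c g * apChi g y) =
      fun y => ∑ g, (c g * (apHat X g / X.card) ^ k) * apChi g y := by
  induction k with
  | zero => simp
  | succ k ih =>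
    rw [Function.iterate_succ_apply', ih, apT_fourier]
    funext y
    exact Finset.sum_congr rfl fun g _ => by ring

lemma ap_l1 (A B : Finset (Fin n → ZMod 2)) (hA : A.Nonempty) :
    ∑ g, |apHat A g * apHat B g / (2 ^ n * A.card)| ≤ Real.sqrt ((B.card : ℝ) / A.card) := by
  have hA' : (0 : ℝ) < A.card := by exact_mod_cast hA.card_pos
  have h := Finset.sum_mul_sq_le_sq_mul_sq Finset.univ (fun g => |apHat A g|) (fun g => |apHat B g|)
  simp only [sq_abs, apHat_parseval] at h
  apply Real.le_sqrt_of_sq_le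
  have e : ∑ g, |apHat A g * apHat B g / (2 ^ n * A.card)|
      = (∑ g, |apHat A g| * |apHat B g|) / (2 ^ n * A.card) := by
    rw [Finset.sum_div]
    refine Finset.sum_congr rfl fun g _ => ?_
    rw [abs_div, abs_mul, abs_of_pos (show (0 : ℝ) < 2 ^ n * A.card by positivity)]
  rw [e, div_pow, div_le_div_iff₀ (by positivity) hA']
  calc _ ≤ (2 ^ n * (A.card : ℝ) * (2 ^ n * B.card)) * A.card := by gcongr
    _ = _ := by ring

lemma ap_period (A B X : Finset (Fin n → ZMod 2)) (hA : A.Nonempty) (v : Fin n → ZMod 2)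
    (hv : ∀ g, 1 / 2 ≤ |apHat X g / X.card| → apChi g v = 1) (l : ℕ) (hl : 0 < l)
    (y : Fin n → ZMod 2) :
    |(apT X)^[2 * l] (rhoMeas A B) y - (apT X)^[2 * l] (rhoMeas A B) (y + v)| ≤
      (2 : ℝ) ^ (-(l : ℤ)) * Real.sqrt ((B.card : ℝ) / A.card) := by
  have hr : rhoMeas A B = fun y => ∑ g, (apHat A g * apHat B g / (2 ^ n * A.card)) * apChi g y :=
    funext (ap_rho_fourier A B)
  rw [hr, apT_iter_fourier]
  simp only
  rw [← Finset.sum_sub_distrib]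
  refine (Finset.abs_sum_le_sum_abs _ _).trans ?_
  refine le_trans ?_ (mul_le_mul_of_nonneg_left (ap_l1 A B hA) (by positivity))
  rw [Finset.mul_sum]
  refine Finset.sum_le_sum fun g _ => ?_
  rw [apChi_add]
  set c := apHat A g * apHat B g / (2 ^ n * A.card)
  set m := apHat X g / X.card
  have e : c * m ^ (2 * l) * apChi g y - c * m ^ (2 * l) * (apChi g y * apChi g v)
    = c * (m ^ (2 * l) * (1 - apChi g v)) * apChi g y := by ring
  rw [e, abs_mul, apChi_abs, mul_one, abs_mul, mul_comm]
  refine mul_le_mul_of_nonneg_right ?_ (abs_nonneg _)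
  by_cases hm : 1 / 2 ≤ |m|
  · rw [hv g hm]; simp
  · push Not at hm
    rw [abs_mul, abs_pow]
    have h1 : |1 - apChi g v| ≤ 2 := by
      unfold apChi; split_ifs <;> norm_num
    calc |m| ^ (2 * l) * |1 - apChi g v| ≤ (1 / 2) ^ (2 * l) * 2 := by gcongr
      _ ≤ (1 / 2) ^ (l + 1) * 2 := by
        gcongr ?_ * 2
        exact pow_le_pow_of_le_one (by norm_num) (by norm_num) (by omega)
      _ = _ := by
        rw [zpow_neg, zpow_natCast, pow_succ, one_div, inv_pow]; ring

lemma ap_chang_aux (b : Finset (Fin n → ZMod 2))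
    (hb : LinearIndepOn (ZMod 2) id (b : Set (Fin n → ZMod 2))) (C : ℝ)
    (s : (Fin n → ZMod 2) → ℝ) :
    ∑ x, ∏ g ∈ b, (C + s g * apChi g x) = 2 ^ n * C ^ b.card := by
  have h : ∀ x, ∏ g ∈ b, (C + s g * apChi g x) =
      ∑ T ∈ b.powerset, (∏ g ∈ T, s g) * C ^ (b \ T).card * apChi (∑ g ∈ T, g) x := by
    intro x
    simp_rw [add_comm C]
    rw [Finset.prod_add]
    refine Finset.sum_congr rfl fun T _ => ?_
    rw [Finset.prod_mul_distrib, apChi_sum]; simp; ring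
  simp_rw [h]
  rw [Finset.sum_comm]
  simp_rw [← Finset.mul_sum, apChi_orth]
  rw [Finset.sum_eq_single ∅]
  · simp [mul_comm]
  · intro T hT hne
    rw [if_neg, mul_zero]
    intro h0
    rw [Finset.mem_powerset] at hT
    obtain ⟨a, ha⟩ := Finset.nonempty_iff_ne_empty.2 hne
    have := linearIndepOn_iff'.1 hb T (fun _ => 1) (by exact_mod_cast hT) (by simpa using h0) a ha
    exact one_ne_zero this
  · simp

lemma ap_chang (X : Finset (Fin n → ZMod 2)) (hX : X.Nonempty) (b : Finset (Fin n → ZMod 2))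
    (hb : LinearIndepOn (ZMod 2) id (b : Set (Fin n → ZMod 2)))
    (hs : ∀ g ∈ b, 1 / 2 ≤ |apHat X g / X.card|) :
    (b.card : ℝ) ≤ 8 * Real.log (2 ^ n / X.card) := by
  have hX' : (0 : ℝ) < X.card := by exact_mod_cast hX.card_pos
  let c : (Fin n → ZMod 2) → ℝ := fun g => if 0 ≤ apHat X g / X.card then 1 else -1
  have hc : ∀ g, c g * (apHat X g / X.card) = |apHat X g / X.card| := by
    intro g; simp only [c]; split_ifs with h
    · rw [abs_of_nonneg h, one_mul]
    · rw [abs_of_neg (not_le.1 h)]; ring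
  have hcc : ∀ g, c g = 1 ∨ c g = -1 := by
    intro g; simp only [c]; split_ifs <;> simp
  -- Jensen
  have h1 : Real.exp ((b.card : ℝ) / 4) ≤
      (∑ x ∈ X, Real.exp (∑ g ∈ b, (1 / 2) * (c g * apChi g x))) / X.card := by
    have hj := (convexOn_exp).map_sum_le (t := X) (w := fun _ => (X.card : ℝ)⁻¹)
      (p := fun x => ∑ g ∈ b, (1 / 2) * (c g * apChi g x)) (fun _ _ => by positivity)
      (by simp [hX'.ne']) (fun _ _ => Set.mem_univ _)
    simp only [smul_eq_mul] at hj
    rw [← Finset.mul_sum, ← Finset.mul_sum, inv_mul_eq_div, inv_mul_eq_div] at hj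
    refine le_trans (Real.exp_le_exp.2 ?_) hj
    rw [Finset.sum_comm, Finset.sum_div]
    have : ∀ g ∈ b, (1 / 4 : ℝ) ≤ (∑ x ∈ X, 1 / 2 * (c g * apChi g x)) / X.card := by
      intro g hg
      have := hs g hg
      rw [← hc] at this
      rw [← Finset.mul_sum, ← Finset.mul_sum]
      have e : (1 / 2 * (c g * ∑ x ∈ X, apChi g x)) / (X.card : ℝ)
        = 1 / 2 * (c g * (apHat X g / X.card)) := by rw [apHat]; ring
      rw [e]; linarith
    have h := Finset.sum_le_sum this
    simp only [Finset.sum_const, nsmul_eq_mul] at h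
    linarith
  have h2 : ∑ x ∈ X, Real.exp (∑ g ∈ b, (1 / 2) * (c g * apChi g x)) ≤
      2 ^ n * Real.exp ((b.card : ℝ) / 8) := by
    calc _ ≤ ∑ x, Real.exp (∑ g ∈ b, (1 / 2) * (c g * apChi g x)) :=
          Finset.sum_le_sum_of_subset_of_nonneg (Finset.subset_univ _)
            (fun _ _ _ => (Real.exp_pos _).le)
      _ = ∑ x, ∏ g ∈ b, (Real.cosh (1 / 2) + (Real.sinh (1 / 2) * c g) * apChi g x) := by
          refine Finset.sum_congr rfl fun x _ => ?_
          rw [Real.exp_sum]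
          refine Finset.prod_congr rfl fun g _ => ?_
          have : c g * apChi g x = 1 ∨ c g * apChi g x = -1 := by
            rcases hcc g with h | h <;> rw [h] <;> unfold apChi <;> split_ifs <;> simp
          rw [mul_assoc]
          rcases this with h | h <;> rw [h]
          · rw [mul_one, mul_one, Real.cosh_add_sinh]
          · rw [mul_neg_one, mul_neg_one, ← sub_eq_add_neg, Real.cosh_sub_sinh]
      _ = 2 ^ n * Real.cosh (1 / 2) ^ b.card := ap_chang_aux b hb _ _
      _ ≤ 2 ^ n * Real.exp ((1 / 2) ^ 2 / 2) ^ b.card := by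
          gcongr
          exact Real.cosh_le_exp_half_sq _
      _ = _ := by
          rw [← Real.exp_nat_mul]; congr 2; ring
  have h3 : Real.exp ((b.card : ℝ) / 8) ≤ 2 ^ n / X.card := by
    have h4 : Real.exp ((b.card : ℝ) / 4) = Real.exp ((b.card : ℝ) / 8) * Real.exp ((b.card : ℝ) / 8) := by
      rw [← Real.exp_add]; congr 1; ring
    rw [le_div_iff₀ hX'] at h1 ⊢
    have := h1.trans h2
    rw [h4] at this
    have hp := Real.exp_pos ((b.card : ℝ) / 8)
    nlinarith
  have := (Real.le_log_iff_exp_le (by positivity)).2 h3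
  linarith

lemma ap_subspace (X : Finset (Fin n → ZMod 2)) (hX : X.Nonempty) :
    ∃ V : Submodule (ZMod 2) (Fin n → ZMod 2),
      (n : ℝ) - Module.finrank (ZMod 2) V ≤ 8 * Real.log (2 ^ n / X.card) ∧
      ∀ v ∈ V, ∀ g, 1 / 2 ≤ |apHat X g / X.card| → apChi g v = 1 := by
  obtain ⟨b, hbs, hspan, hb⟩ := exists_linearIndependent (ZMod 2)
    {g : Fin n → ZMod 2 | 1 / 2 ≤ |apHat X g / X.card|}
  have hbf : b.Finite := Set.toFinite b
  lift b to Finset (Fin n → ZMod 2) using hbf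
  let L : (Fin n → ZMod 2) →ₗ[ZMod 2] (b → ZMod 2) :=
    LinearMap.pi fun g => dotProductBilin (ZMod 2) (ZMod 2) g.1
  have hL : ∀ v g, L v g = g.1 ⬝ᵥ v := fun v g => rfl
  refine ⟨LinearMap.ker L, ?_, ?_⟩
  · refine le_trans ?_ (ap_chang X hX b hb (fun g hg => hbs hg))
    have h1 := L.finrank_range_add_finrank_ker
    have h2 := Submodule.finrank_le (LinearMap.range L)
    simp only [Module.finrank_fintype_fun_eq_card, Fintype.card_fin, Fintype.card_coe] at h1 h2
    have : (n : ℝ) ≤ b.card + Module.finrank (ZMod 2) (LinearMap.ker L) := by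
      exact_mod_cast (by omega)
    linarith
  · intro v hv g hg
    have hg' : g ∈ Submodule.span (ZMod 2) (b : Set (Fin n → ZMod 2)) := by
      rw [hspan]; exact Submodule.subset_span hg
    have : g ⬝ᵥ v = 0 := by
      clear hg
      induction hg' using Submodule.span_induction with
      | mem x hx => 
        have := congrFun (LinearMap.mem_ker.1 hv) ⟨x, hx⟩
        rwa [hL] at this
      | zero => simp
      | add x y _ _ hx hy => rw [add_dotProduct, hx, hy, add_zero]
      | smul a x _ hx => rw [smul_dotProduct, hx, smul_zero]
    simp [apChi, this]


/-- sampled measure -/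
noncomputable def apF {t : ℕ} (B : Finset (Fin n → ZMod 2)) (a : Fin t → Fin n → ZMod 2)
    (y : Fin n → ZMod 2) : ℝ := (∑ i, if y + a i ∈ B then (1 : ℝ) else 0) / t

lemma ap_rho_nonneg (A B : Finset (Fin n → ZMod 2)) (y : Fin n → ZMod 2) : 0 ≤ rhoMeas A B y := by
  unfold rhoMeas; positivity

lemma ap_rho_le (A B : Finset (Fin n → ZMod 2)) (y : Fin n → ZMod 2) : rhoMeas A B y ≤ 1 := by
  unfold rhoMeas
  refine div_le_one_of_le₀ ?_ (by positivity)
  exact_mod_cast Finset.card_filter_le _ _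

lemma apF_nonneg {t : ℕ} (B : Finset (Fin n → ZMod 2)) (a : Fin t → Fin n → ZMod 2)
    (y : Fin n → ZMod 2) : 0 ≤ apF B a y := by
  unfold apF
  exact div_nonneg (Finset.sum_nonneg fun i _ => by split_ifs <;> norm_num) (by positivity)

lemma apF_le {t : ℕ} (B : Finset (Fin n → ZMod 2)) (a : Fin t → Fin n → ZMod 2)
    (y : Fin n → ZMod 2) : apF B a y ≤ 1 := by
  unfold apF
  refine div_le_one_of_le₀ ?_ (by positivity)
  calc _ ≤ ∑ i : Fin t, (1 : ℝ) := Finset.sum_le_sum fun i _ => by split_ifs <;> norm_num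
    _ = t := by simp

lemma ap_mgf (A B : Finset (Fin n → ZMod 2)) (hA : A.Nonempty) (t : ℕ) (y : Fin n → ZMod 2)
    (s : ℝ) :
    ∑ a ∈ Fintype.piFinset (fun _ : Fin t => A),
      Real.exp (s * ∑ i, ((if y + a i ∈ B then (1 : ℝ) else 0) - rhoMeas A B y)) ≤
      (A.card : ℝ) ^ t * Real.exp (t * (s ^ 2 / 8)) := by
  have hA' : (0 : ℝ) < A.card := by exact_mod_cast hA.card_pos
  set p := rhoMeas A B y with hp
  have e1 : ∑ a ∈ Fintype.piFinset (fun _ : Fin t => A),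
      Real.exp (s * ∑ i, ((if y + a i ∈ B then (1 : ℝ) else 0) - p)) =
      (∑ x ∈ A, Real.exp (s * ((if y + x ∈ B then (1 : ℝ) else 0) - p))) ^ t := by
    have := (Finset.prod_univ_sum (fun _ : Fin t => A)
      (fun _ x => Real.exp (s * ((if y + x ∈ B then (1 : ℝ) else 0) - p)))).symm
    simp only [Finset.prod_const, Finset.card_univ, Fintype.card_fin] at this
    rw [← this]
    refine Finset.sum_congr rfl fun a _ => ?_
    rw [Finset.mul_sum, Real.exp_sum]
  have e2 : ∑ x ∈ A, Real.exp (s * ((if y + x ∈ B then (1 : ℝ) else 0) - p)) =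
      A.card * (p * Real.exp (s * (1 - p)) + (1 - p) * Real.exp (s * (0 - p))) := by
    have hx : ∀ x, Real.exp (s * ((if y + x ∈ B then (1 : ℝ) else 0) - p)) =
        Real.exp (s * (0 - p)) + (if y + x ∈ B then
          Real.exp (s * (1 - p)) - Real.exp (s * (0 - p)) else 0) := by
      intro x; split_ifs <;> ring
    simp_rw [hx]
    rw [Finset.sum_add_distrib, ← Finset.sum_filter]
    simp only [Finset.sum_const, nsmul_eq_mul]
    have : ((A.filter fun a => y + a ∈ B).card : ℝ) = p * A.card := by
      rw [hp, rhoMeas]; field_simp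
    rw [this]; ring
  rw [e1, e2, mul_pow, Real.exp_nat_mul]
  have h := ap_hoeff p s (ap_rho_nonneg A B y) (ap_rho_le A B y)
  have h0 : 0 ≤ p * Real.exp (s * (1 - p)) + (1 - p) * Real.exp (s * (0 - p)) := by
    have := ap_rho_nonneg A B y
    have := ap_rho_le A B y
    have : 0 ≤ 1 - p := by linarith
    positivity
  gcongr

lemma ap_sample (A B : Finset (Fin n → ZMod 2)) (hA : A.Nonempty) (t : ℕ) (ht : 0 < t)
    (ε : ℝ) (hε : 0 < ε) (y : Fin n → ZMod 2) :
    ∑ a ∈ Fintype.piFinset (fun _ : Fin t => A),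
      (if ε < |rhoMeas A B y - apF B a y| then (1 : ℝ) else 0) ≤
      (A.card : ℝ) ^ t * (2 * Real.exp (-2 * ε ^ 2 * t)) := by
  have ht' : (0 : ℝ) < t := by exact_mod_cast ht
  have h1 := ap_mgf A B hA t y (4 * ε)
  have h2 := ap_mgf A B hA t y (-(4 * ε))
  have e : (A.card : ℝ) ^ t * (2 * Real.exp (-2 * ε ^ 2 * t)) =
    ((A.card : ℝ) ^ t * Real.exp (t * ((4 * ε) ^ 2 / 8)) +
     (A.card : ℝ) ^ t * Real.exp (t * ((-(4 * ε)) ^ 2 / 8))) * Real.exp (-4 * ε ^ 2 * t) := by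
    have : Real.exp (-2 * ε ^ 2 * t) = Real.exp (t * ((4 * ε) ^ 2 / 8)) * Real.exp (-4 * ε ^ 2 * t) := by
      rw [← Real.exp_add]; congr 1; ring
    rw [neg_sq, this]; ring
  rw [e]
  refine le_trans ?_ (mul_le_mul_of_nonneg_right (add_le_add h1 h2) (Real.exp_pos _).le)
  rw [← Finset.sum_add_distrib, Finset.sum_mul]
  refine Finset.sum_le_sum fun a _ => ?_
  have hD : ∑ i, ((if y + a i ∈ B then (1 : ℝ) else 0) - rhoMeas A B y)
      = t * (apF B a y - rhoMeas A B y) := by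
    rw [Finset.sum_sub_distrib, apF]; simp; field_simp
  rw [hD]
  set d := apF B a y - rhoMeas A B y
  rw [abs_sub_comm]
  split_ifs with hd
  · rw [add_mul, ← Real.exp_add, ← Real.exp_add]
    have hpos : 0 < ε * t := by positivity
    rcases lt_abs.1 hd with h | h
    · have : 1 ≤ Real.exp (4 * ε * (t * d) + -4 * ε ^ 2 * t) := by
        apply Real.one_le_exp
        nlinarith
      have := Real.exp_pos (-(4 * ε) * (t * d) + -4 * ε ^ 2 * t)
      linarith
    · have : 1 ≤ Real.exp (-(4 * ε) * (t * d) + -4 * ε ^ 2 * t) := by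
        apply Real.one_le_exp
        nlinarith
      have := Real.exp_pos (4 * ε * (t * d) + -4 * ε ^ 2 * t)
      linarith
  · positivity

/-- number of bad points -/
noncomputable def apBad {t : ℕ} (A B : Finset (Fin n → ZMod 2)) (ε : ℝ)
    (a : Fin t → Fin n → ZMod 2) : ℝ :=
  ∑ y, (if ε < |rhoMeas A B y - apF B a y| then (1 : ℝ) else 0)

lemma ap_total (A B : Finset (Fin n → ZMod 2)) (hA : A.Nonempty) (t : ℕ) (ht : 0 < t)
    (ε : ℝ) (hε : 0 < ε) :
    ∑ a ∈ Fintype.piFinset (fun _ : Fin t => A), apBad A B ε a ≤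
      (A.card : ℝ) ^ t * (2 * (A + B).card * Real.exp (-2 * ε ^ 2 * t)) := by
  unfold apBad
  rw [Finset.sum_comm]
  calc _ ≤ ∑ y, (if y ∈ A + B then (A.card : ℝ) ^ t * (2 * Real.exp (-2 * ε ^ 2 * t)) else 0) := by
        refine Finset.sum_le_sum fun y _ => ?_
        split_ifs with hy
        · exact ap_sample A B hA t ht ε hε y
        · refine le_of_eq (Finset.sum_eq_zero fun a ha => ?_)
          have hn : ∀ x ∈ A, y + x ∉ B := by
            intro x hx hb
            apply hy
            have := Finset.add_mem_add hx hb
            rwa [add_comm y x, ← add_assoc, ap_char2, zero_add] at this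
          rw [Fintype.mem_piFinset] at ha
          have h1 : rhoMeas A B y = 0 := by
            rw [rhoMeas, Finset.filter_false_of_mem hn]; simp
          have h2 : apF B a y = 0 := by
            rw [apF, Finset.sum_eq_zero, zero_div]
            intro i _
            rw [if_neg (hn _ (ha i))]
          rw [h1, h2]; simp [hε.le]
    _ = _ := by
        rw [← Finset.sum_filter]
        simp; ring

lemma ap_good (A B : Finset (Fin n → ZMod 2)) (hA : A.Nonempty) (hB : B.Nonempty) (t : ℕ)
    (ht : 0 < t) (ε : ℝ) (hε : 0 < ε) :
    ((A.card : ℝ) ^ t) / 2 ≤ (((Fintype.piFinset (fun _ : Fin t => A)).filter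
      (fun a => apBad A B ε a ≤ 4 * (A + B).card * Real.exp (-2 * ε ^ 2 * t))).card : ℝ) := by
  set P := Fintype.piFinset (fun _ : Fin t => A)
  have hP : (P.card : ℝ) = (A.card : ℝ) ^ t := by simp [P]
  set Q := 2 * ((A + B).card : ℝ) * Real.exp (-2 * ε ^ 2 * t) with hQ
  have hAB : 0 < ((A + B).card : ℝ) := by exact_mod_cast (hA.add hB).card_pos
  have hQ0 : 0 < Q := by positivity
  have e : 4 * ((A + B).card : ℝ) * Real.exp (-2 * ε ^ 2 * t) = 2 * Q := by rw [hQ]; ring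
  rw [e]
  have h := ap_total A B hA t ht ε hε
  have hc := Finset.card_filter_add_card_filter_not (s := P) (fun a => apBad A B ε a ≤ 2 * Q)
  have hc' : ((P.filter (fun a => apBad A B ε a ≤ 2 * Q)).card : ℝ) +
    ((P.filter (fun a => ¬ apBad A B ε a ≤ 2 * Q)).card : ℝ) = (A.card : ℝ) ^ t := by
    rw [← hP]; exact_mod_cast hc
  have h3 : ((P.filter (fun a => ¬ apBad A B ε a ≤ 2 * Q)).card : ℝ) * (2 * Q) ≤
      ∑ a ∈ P, apBad A B ε a := by
    rw [← nsmul_eq_mul]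
    refine (Finset.card_nsmul_le_sum _ (apBad A B ε) _ ?_).trans
      (Finset.sum_le_sum_of_subset_of_nonneg (Finset.filter_subset _ _) ?_)
    · intro a ha; exact (not_le.1 (Finset.mem_filter.1 ha).2).le
    · intro a _ _
      exact Finset.sum_nonneg fun y _ => by split_ifs <;> norm_num
  have h4 := h3.trans h
  have h5 : ((P.filter (fun a => ¬ apBad A B ε a ≤ 2 * Q)).card : ℝ) ≤ (A.card : ℝ) ^ t / 2 := by
    rw [← hQ] at h4
    refine le_of_mul_le_mul_right ?_ hQ0
    linarith
  linarith

lemma ap_pigeon {t : ℕ} (P : Finset (Fin t → Fin n → ZMod 2)) :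
    ∃ g : Fin t → Fin n → ZMod 2,
      (P.card : ℝ) * 2 ^ n ≤
        ((Finset.univ.filter fun x : Fin n → ZMod 2 => (fun i => g i + x) ∈ P).card : ℝ) *
          (2 ^ n) ^ t := by
  have h : ∑ g : Fin t → Fin n → ZMod 2,
      ((Finset.univ.filter fun x : Fin n → ZMod 2 => (fun i => g i + x) ∈ P).card : ℝ) =
      P.card * 2 ^ n := by
    simp only [Finset.card_filter, Nat.cast_sum]
    rw [Finset.sum_comm]
    have : ∀ x : Fin n → ZMod 2, ∑ g : Fin t → Fin n → ZMod 2,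
        (((if (fun i => g i + x) ∈ P then 1 else 0 : ℕ)) : ℝ) = P.card := by
      intro x
      refine (Fintype.sum_equiv (Equiv.addRight (fun _ : Fin t => x))
        _ (fun g => (((if g ∈ P then 1 else 0 : ℕ)) : ℝ)) (fun g => rfl)).trans ?_
      simp
    simp_rw [this]
    simp [ZMod.card, mul_comm]
  by_contra hcon
  push Not at hcon
  have := Finset.sum_lt_sum_of_nonempty (s := (Finset.univ : Finset (Fin t → Fin n → ZMod 2)))
    Finset.univ_nonempty (fun g _ => hcon g)
  rw [← Finset.sum_mul, h] at this
  simp [ZMod.card] at this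
  nlinarith

lemma ap_getX (α : ℝ) (hα0 : 0 < α)
    (A : Finset (Fin n → ZMod 2)) (hA : α * 2 ^ n ≤ (A.card : ℝ))
    (ε : ℝ) (hε : 0 < ε) (t : ℕ) (ht : 0 < t)
    (B : Finset (Fin n → ZMod 2)) (hB : B.Nonempty) :
    ∃ (g : Fin t → Fin n → ZMod 2) (X : Finset (Fin n → ZMod 2)),
      α ^ t / 2 * 2 ^ n ≤ X.card ∧
      ∀ x ∈ X, ∑ y, (if ε < |rhoMeas A B y - apF B g (y + x)| then (1 : ℝ) else 0) ≤
        4 * (A + B).card * Real.exp (-2 * ε ^ 2 * t) := by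
  have hAn : A.Nonempty := by
    rw [← Finset.card_pos]
    have : (0 : ℝ) < A.card := lt_of_lt_of_le (by positivity) hA
    exact_mod_cast this
  obtain ⟨g, hg⟩ := ap_pigeon ((Fintype.piFinset (fun _ : Fin t => A)).filter
      (fun a => apBad A B ε a ≤ 4 * (A + B).card * Real.exp (-2 * ε ^ 2 * t)))
  refine ⟨g, Finset.univ.filter fun x : Fin n → ZMod 2 => (fun i => g i + x) ∈
    ((Fintype.piFinset (fun _ : Fin t => A)).filter
      (fun a => apBad A B ε a ≤ 4 * (A + B).card * Real.exp (-2 * ε ^ 2 * t))), ?_, ?_⟩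
  · have h1 := ap_good A B hAn hB t ht ε hε
    have h2 : (α * 2 ^ n) ^ t ≤ (A.card : ℝ) ^ t := by gcongr
    rw [mul_pow] at h2
    have h3 : (0 : ℝ) < (2 ^ n) ^ t := by positivity
    have h4 : (0 : ℝ) < 2 ^ n := by positivity
    have h5 : α ^ t / 2 * 2 ^ n * (2 ^ n) ^ t ≤ _ := le_trans (by nlinarith) hg
    exact le_of_mul_le_mul_right h5 h3
  · intro x hx
    have h := (Finset.mem_filter.1 (Finset.mem_filter.1 hx).2).2
    refine le_trans (le_of_eq ?_) h
    unfold apBad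
    refine Finset.sum_congr rfl fun y _ => ?_
    have : apF B g (y + x) = apF B (fun i => g i + x) y := by
      unfold apF
      congr 1
      refine Finset.sum_congr rfl fun i _ => ?_
      rw [show y + x + g i = y + (g i + x) by abel]
    rw [this]

lemma apT_sum (X : Finset (Fin n → ZMod 2)) (hX : X.Nonempty) (f : (Fin n → ZMod 2) → ℝ) :
    ∑ y, apT X f y = ∑ y, f y := by
  have hX' : (X.card : ℝ) ≠ 0 := by exact_mod_cast hX.card_pos.ne'
  unfold apT
  rw [← Finset.sum_div, Finset.sum_comm]
  simp_rw [ap_shift]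
  simp [hX']

lemma apT_mono (X : Finset (Fin n → ZMod 2)) (f h : (Fin n → ZMod 2) → ℝ)
    (hfh : ∀ y, f y ≤ h y) (y : Fin n → ZMod 2) : apT X f y ≤ apT X h y := by
  unfold apT
  gcongr
  exact hfh _

/-- The key comparison: if `|f (y) - k (y+x)| ≤ c + u x y` then the average is controlled. -/
lemma apT_close (X : Finset (Fin n → ZMod 2)) (hX : X.Nonempty) (f h u : (Fin n → ZMod 2) → ℝ)
    (c : ℝ) (hfh : ∀ y, |f y - h y| ≤ c + u y) (y : Fin n → ZMod 2) :
    |apT X f y - apT X h y| ≤ c + apT X u y := by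
  have hX' : (0 : ℝ) < X.card := by exact_mod_cast hX.card_pos
  unfold apT
  rw [← sub_div, ← Finset.sum_sub_distrib, abs_div, abs_of_pos hX', div_le_iff₀ hX', add_mul,
    div_mul_cancel₀ _ hX'.ne']
  refine (Finset.abs_sum_le_sum_abs _ _).trans ((Finset.sum_le_sum fun x _ => hfh _).trans ?_)
  rw [Finset.sum_add_distrib]; simp [mul_comm]

lemma ap_avg_close (X : Finset (Fin n → ZMod 2)) (hX : X.Nonempty) (k : (Fin n → ZMod 2) → ℝ)
    (r ε : ℝ) (d : (Fin n → ZMod 2) → ℝ) (hε : 0 ≤ ε)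
    (hd : ∀ x, d x ∈ Set.Icc (0 : ℝ) 1) (hr : r ∈ Set.Icc (0 : ℝ) 1) :
    |(∑ x ∈ X, d x) / X.card - r| ≤
      ε + (∑ x ∈ X, if ε < |d x - r| then (1 : ℝ) else 0) / X.card := by
  have hX' : (0 : ℝ) < X.card := by exact_mod_cast hX.card_pos
  have e : (∑ x ∈ X, d x) / X.card - r = (∑ x ∈ X, (d x - r)) / X.card := by
    rw [Finset.sum_sub_distrib, sub_div]; simp; field_simp
  rw [e, abs_div, abs_of_pos hX', div_le_iff₀ hX', add_mul, div_mul_cancel₀ _ hX'.ne']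
  have : ∀ x ∈ X, |d x - r| ≤ ε + (if ε < |d x - r| then (1 : ℝ) else 0) := by
    intro x _
    obtain ⟨h1, h2⟩ := hd x
    obtain ⟨h3, h4⟩ := hr
    split_ifs with h
    · rw [abs_le]; constructor <;> linarith
    · linarith
  refine (Finset.abs_sum_le_sum_abs _ _).trans ((Finset.sum_le_sum this).trans ?_)
  rw [Finset.sum_add_distrib]; simp [mul_comm]

lemma ap_two (A B X : Finset (Fin n → ZMod 2)) (hX : X.Nonempty) (ε M : ℝ) (hε : 0 < ε)
    (t : ℕ) (g : Fin t → Fin n → ZMod 2)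
    (hM : ∀ x ∈ X, ∑ y, (if ε < |rhoMeas A B y - apF B g (y + x)| then (1 : ℝ) else 0) ≤ M) :
    ∃ e : (Fin n → ZMod 2) → ℝ, (∀ y, 0 ≤ e y) ∧ ∑ y, e y ≤ 2 * M ∧
      ∀ y, |rhoMeas A B y - apT X (apT X (rhoMeas A B)) y| ≤ 2 * ε + e y := by
  have hX' : (0 : ℝ) < X.card := by exact_mod_cast hX.card_pos
  let ρ := rhoMeas A B
  let f := apF B g
  let w : (Fin n → ZMod 2) → ℝ :=
    fun y => (∑ x ∈ X, if ε < |f (y + x) - ρ y| then (1 : ℝ) else 0) / X.card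
  let u : (Fin n → ZMod 2) → ℝ :=
    fun y => (∑ x ∈ X, if ε < |ρ (y + x) - f y| then (1 : ℝ) else 0) / X.card
  have hw : ∑ y, w y ≤ M := by
    simp only [w]
    rw [← Finset.sum_div, Finset.sum_comm, div_le_iff₀ hX']
    have := Finset.sum_le_sum hM
    simp only [abs_sub_comm (rhoMeas A B _)] at this
    refine this.trans ?_
    simp [mul_comm]
  have hu : ∑ y, u y ≤ M := by
    simp only [u]
    rw [← Finset.sum_div, Finset.sum_comm, div_le_iff₀ hX']
    have h2 : ∀ x ∈ X, ∑ y, (if ε < |ρ (y + x) - f y| then (1 : ℝ) else 0) ≤ M := by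
      intro x hx
      rw [← ap_shift _ x]
      simp only [add_assoc, ap_char2, add_zero]
      exact hM x hx
    refine (Finset.sum_le_sum h2).trans ?_
    simp [mul_comm]
  have hw0 : ∀ y, 0 ≤ w y := fun y =>
    div_nonneg (Finset.sum_nonneg fun i _ => by split_ifs <;> norm_num) hX'.le
  have hu0 : ∀ y, 0 ≤ u y := fun y =>
    div_nonneg (Finset.sum_nonneg fun i _ => by split_ifs <;> norm_num) hX'.le
  refine ⟨fun y => apT X u y + w y, ?_, ?_, ?_⟩
  · intro y
    exact add_nonneg (div_nonneg (Finset.sum_nonneg fun i _ => hu0 _) hX'.le) (hw0 y)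
  · rw [Finset.sum_add_distrib, apT_sum X hX]; linarith
  · intro y
    have h1 : ∀ y, |apT X ρ y - f y| ≤ ε + u y := fun y =>
      ap_avg_close X hX f (f y) ε (fun x => ρ (y + x)) hε.le
        (fun x => ⟨ap_rho_nonneg _ _ _, ap_rho_le _ _ _⟩) ⟨apF_nonneg _ _ _, apF_le _ _ _⟩
    have h2 : |apT X f y - ρ y| ≤ ε + w y :=
      ap_avg_close X hX f (ρ y) ε (fun x => f (y + x)) hε.le
        (fun x => ⟨apF_nonneg _ _ _, apF_le _ _ _⟩) ⟨ap_rho_nonneg _ _ _, ap_rho_le _ _ _⟩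
    have h3 := apT_close X hX (apT X ρ) f u ε h1 y
    have h4 := abs_sub_le (apT X (apT X ρ) y) (apT X f y) (ρ y)
    rw [abs_sub_comm]
    simp only [ρ] at h2 h3 h4 ⊢
    linarith

lemma ap_iter (A B X : Finset (Fin n → ZMod 2)) (hX : X.Nonempty) (ε M : ℝ)
    (e : (Fin n → ZMod 2) → ℝ) (he0 : ∀ y, 0 ≤ e y) (he : ∑ y, e y ≤ 2 * M)
    (h : ∀ y, |rhoMeas A B y - apT X (apT X (rhoMeas A B)) y| ≤ 2 * ε + e y) (l : ℕ) :
    ∃ u : (Fin n → ZMod 2) → ℝ, (∀ y, 0 ≤ u y) ∧ ∑ y, u y ≤ 2 * M * l ∧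
      ∀ y, |rhoMeas A B y - (apT X)^[2 * l] (rhoMeas A B) y| ≤ 2 * ε * l + u y := by
  induction l with
  | zero => exact ⟨fun _ => 0, by simp, by simp, by simp⟩
  | succ l ih =>
    obtain ⟨u, hu0, hus, hu⟩ := ih
    have hT0 : ∀ f : (Fin n → ZMod 2) → ℝ, (∀ y, 0 ≤ f y) → ∀ y, 0 ≤ apT X f y := fun f hf y =>
      div_nonneg (Finset.sum_nonneg fun i _ => hf _) (by positivity)
    refine ⟨fun y => e y + apT X (apT X u) y, ?_, ?_, ?_⟩
    · intro y; exact add_nonneg (he0 y) (hT0 _ (hT0 _ hu0) y)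
    · rw [Finset.sum_add_distrib, apT_sum X hX, apT_sum X hX]; push_cast; linarith
    · intro y
      rw [show 2 * (l + 1) = 2 * l + 1 + 1 by ring, Function.iterate_succ_apply',
        Function.iterate_succ_apply']
      have h1 := apT_close X hX _ _ _ _ (apT_close X hX _ _ _ _ hu) y
      have h2 := abs_sub_le (rhoMeas A B y) (apT X (apT X (rhoMeas A B)) y)
        (apT X (apT X ((apT X)^[2 * l] (rhoMeas A B))) y)
      have h3 := h y
      push_cast
      linarith

lemma ap_markov (u : (Fin n → ZMod 2) → ℝ) (hu0 : ∀ y, 0 ≤ u y) (K η : ℝ) (hη : 0 < η)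
    (hu : ∑ y, u y ≤ K) : ((Finset.univ.filter fun y => η < u y).card : ℝ) ≤ K / η := by
  rw [le_div_iff₀ hη, ← nsmul_eq_mul]
  refine le_trans ?_ hu
  refine (Finset.card_nsmul_le_sum _ u _ ?_).trans
      (Finset.sum_le_sum_of_subset_of_nonneg (Finset.filter_subset _ _) ?_)
  · intro a ha; exact (Finset.mem_filter.1 ha).2.le
  · intro a _ _; exact hu0 a

end F

theorem almost_periodicity_over_subspace {n : ℕ} (α : ℝ) (hα0 : 0 < α) (hα1 : α ≤ 1)
    (A : Finset (Fin n → ZMod 2)) (hA : α * 2 ^ n ≤ (A.card : ℝ))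
    (ε : ℝ) (hε : 0 < ε) (t : ℕ) (ht : 0 < t)
    (B : Finset (Fin n → ZMod 2)) (hB : B.Nonempty) :
    ∃ V : Submodule (ZMod 2) (Fin n → ZMod 2),
      (n : ℝ) - Module.finrank (ZMod 2) V ≤ 32 * Real.logb 2 (2 / α ^ t) ∧
      ∀ v ∈ V, ∀ S : Finset (Fin n → ZMod 2), S.Nonempty →
        ∀ η : ℝ, 0 < η → ∀ ℓ : ℕ, 0 < ℓ →
          1 - 16 * ((ℓ : ℝ) / η) * (((A + B).card : ℝ) / S.card) *
              Real.exp (-2 * ε ^ 2 * t) ≤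
            prOver S (fun y =>
              |rhoMeas A B y - rhoMeas A B (y + v)| ≤
                4 * ε * ℓ + 2 * η +
                  (2 : ℝ) ^ (-(ℓ : ℤ)) * Real.sqrt ((B.card : ℝ) / A.card)) := by
  have hAn : A.Nonempty := by
    rw [← Finset.card_pos]
    have : (0 : ℝ) < A.card := lt_of_lt_of_le (by positivity) hA
    exact_mod_cast this
  obtain ⟨g, X, hXc, hM⟩ := ap_getX α hα0 A hA ε hε t ht B hB
  have hX' : (0 : ℝ) < X.card := lt_of_lt_of_le (by positivity) hXc
  have hX : X.Nonempty := by
    rw [← Finset.card_pos]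
    exact_mod_cast hX'
  obtain ⟨V, hV, hVs⟩ := ap_subspace X hX
  refine ⟨V, hV.trans ?_, ?_⟩
  · have hαt : α ^ t ≤ 1 := pow_le_one₀ hα0.le hα1
    have hαt0 : 0 < α ^ t := by positivity
    have h1 : (2 : ℝ) ^ n / X.card ≤ 2 / α ^ t := by
      rw [div_le_div_iff₀ hX' hαt0]
      linarith
    have h2 : Real.log (2 ^ n / X.card) ≤ Real.log (2 / α ^ t) :=
      Real.log_le_log (by positivity) h1
    have h3 : 0 ≤ Real.log (2 / α ^ t) := by
      apply Real.log_nonneg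
      rw [le_div_iff₀ hαt0]; linarith
    have h4 : Real.log (2 / α ^ t) ≤ Real.logb 2 (2 / α ^ t) := by
      rw [Real.logb]
      apply le_div_self h3 (Real.log_pos (by norm_num))
      have := Real.log_two_lt_d9
      linarith
    linarith
  · intro v hv S hS η hη l hl
    obtain ⟨e, he0, hes, he⟩ := ap_two A B X hX ε _ hε t g hM
    obtain ⟨u, hu0, hus, hu⟩ := ap_iter A B X hX ε _ e he0 hes he l
    have hS' : (0 : ℝ) < S.card := by exact_mod_cast hS.card_pos
    have hm1 := ap_markov u hu0 _ η hη hus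
    have hm2 := ap_markov (fun y => u (y + v)) (fun y => hu0 _) _ η hη
      ((ap_shift u v).le.trans hus)
    set c := 4 * ε * l + 2 * η + (2 : ℝ) ^ (-(l : ℤ)) * Real.sqrt ((B.card : ℝ) / A.card) with hc
    unfold prOver
    have hsub : S ⊆ (S.filter fun y => |rhoMeas A B y - rhoMeas A B (y + v)| ≤ c) ∪
        ((Finset.univ.filter fun y => η < u y) ∪
          (Finset.univ.filter fun y => η < u (y + v))) := by
      intro y hy
      simp only [Finset.mem_union, Finset.mem_filter, Finset.mem_univ, true_and]
      by_contra hcon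
      push Not at hcon
      obtain ⟨h1, h2, h3⟩ := hcon
      have h1 := h1 hy
      have p := ap_period A B X hAn v (hVs v hv) l hl y
      have a1 := hu y
      have a2 := hu (y + v)
      rw [abs_sub_comm] at a2
      have b1 := abs_sub_le (rhoMeas A B y) ((apT X)^[2 * l] (rhoMeas A B) y)
        (rhoMeas A B (y + v))
      have b2 := abs_sub_le ((apT X)^[2 * l] (rhoMeas A B) y)
        ((apT X)^[2 * l] (rhoMeas A B) (y + v)) (rhoMeas A B (y + v))
      linarith
    have hcard := (Finset.card_le_card hsub).trans ((Finset.card_union_le _ _).trans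
      (Nat.add_le_add_left (Finset.card_union_le _ _) _))
    have hcard' : (S.card : ℝ) ≤
        ((S.filter fun y => |rhoMeas A B y - rhoMeas A B (y + v)| ≤ c).card : ℝ) +
        (((Finset.univ.filter fun y => η < u y).card : ℝ) +
          ((Finset.univ.filter fun y => η < u (y + v)).card : ℝ)) := by exact_mod_cast hcard
    rw [le_div_iff₀ hS', sub_mul]
    have e1 : 16 * ((l : ℝ) / η) * (((A + B).card : ℝ) / S.card) *
        Real.exp (-2 * ε ^ 2 * t) * S.card =
        2 * (2 * (4 * ((A + B).card : ℝ) * Real.exp (-2 * ε ^ 2 * t)) * l / η) := by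
      field_simp
      ring
    rw [e1]
    linarith
end

section
/- (Quasipolynomial Bogolyubov-Ruzsa Lemma) There exists an absolute constant C > 0 such that the following holds. Let α ∈ (0,1] and let A ⊆ F_2^n satisfy |A| ≥ α·2^n. Then there exists a linear subspace V of F_2^n with V ⊆ A + A + A + A and codimension codim(V) = n − dim(V) ≤ C·(log(2/α))⁴. -/
open scoped Pointwise

noncomputable def brSgn (z : ZMod 2) : ℝ := if z = 0 then 1 else -1

lemma brSgn_add (a b : ZMod 2) : brSgn (a + b) = brSgn a * brSgn b := by
  have h2 : (1 + 1 : ZMod 2) = 0 := by decide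
  have h01 : (1 : ZMod 2) ≠ 0 := by decide
  have H : ∀ c : ZMod 2, c = 0 ∨ c = 1 := by decide
  rcases H a with rfl | rfl <;> rcases H b with rfl | rfl <;> simp [brSgn, h2]

noncomputable def brChi {n : ℕ} (γ x : Fin n → ZMod 2) : ℝ := brSgn (γ ⬝ᵥ x)

lemma brChi_comm {n : ℕ} (γ x : Fin n → ZMod 2) : brChi γ x = brChi x γ := by
  simp [brChi, dotProduct_comm]

lemma brChi_add {n : ℕ} (γ x y : Fin n → ZMod 2) :
    brChi γ (x + y) = brChi γ x * brChi γ y := by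
  simp [brChi, dotProduct_add, brSgn_add]

lemma brChi_zero {n : ℕ} (γ : Fin n → ZMod 2) : brChi γ 0 = 1 := by
  simp [brChi, brSgn]

lemma brChi_or {n : ℕ} (γ x : Fin n → ZMod 2) : brChi γ x = 1 ∨ brChi γ x = -1 := by
  unfold brChi brSgn; split_ifs <;> simp

lemma brChi_abs {n : ℕ} (γ x : Fin n → ZMod 2) : |brChi γ x| = 1 := by
  rcases brChi_or γ x with h | h <;> simp [h]

lemma brChi_sum {n : ℕ} {ι : Type*} (γ : Fin n → ZMod 2) (s : Finset ι)
    (f : ι → Fin n → ZMod 2) : brChi γ (∑ i ∈ s, f i) = ∏ i ∈ s, brChi γ (f i) := by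
  classical
  induction s using Finset.induction_on with
  | empty => simp [brChi_zero]
  | insert a s ha ih => rw [Finset.sum_insert ha, Finset.prod_insert ha, brChi_add, ih]

lemma br_add_self {n : ℕ} (x : Fin n → ZMod 2) : x + x = 0 := by
  ext i
  have : ∀ c : ZMod 2, c + c = 0 := by decide
  exact this _

lemma brChi_sum_univ {n : ℕ} (γ : Fin n → ZMod 2) (h : γ ≠ 0) :
    ∑ x : Fin n → ZMod 2, brChi γ x = 0 := by
  obtain ⟨i, hi⟩ := Function.ne_iff.mp h
  have e : ∑ x : Fin n → ZMod 2, brChi γ (x + Pi.single i 1) = ∑ x : Fin n → ZMod 2, brChi γ x :=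
    Equiv.sum_comp (Equiv.addRight (Pi.single i 1 : Fin n → ZMod 2)) (fun x => brChi γ x)
  have hs : brChi γ (Pi.single i 1) = -1 := by
    unfold brChi brSgn
    rw [dotProduct_single]
    have hi' : ¬ γ i = 0 := hi
    simp [hi']
  simp only [brChi_add, hs] at e
  rw [← Finset.sum_mul] at e
  linarith

lemma brChi_sum_univ' {n : ℕ} (y z : Fin n → ZMod 2) :
    ∑ γ : Fin n → ZMod 2, brChi γ y * brChi γ z = if y = z then (2:ℝ) ^ n else 0 := by
  simp_rw [← brChi_add]
  simp_rw [brChi_comm _ (y + z)]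
  split_ifs with h
  · subst h
    rw [br_add_self]
    simp [brChi_comm 0, brChi_zero]
  · apply brChi_sum_univ
    intro h0
    apply h
    have : y + z + z = z := by rw [h0, zero_add]
    rwa [add_assoc, br_add_self, add_zero] at this

/-- exponential moment -/
lemma br_exp_conv (l z : ℝ) (hz : |z| ≤ 1) :
    Real.exp (l * z) ≤ Real.cosh l + z * Real.sinh l := by
  obtain ⟨h1, h2⟩ := abs_le.mp hz
  have := convexOn_exp.2 (Set.mem_univ l) (Set.mem_univ (-l)) 
    (show 0 ≤ (1 + z) / 2 by linarith) (show 0 ≤ (1 - z) / 2 by linarith) (by ring)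
  simp only [smul_eq_mul] at this
  rw [Real.cosh_eq, Real.sinh_eq]
  calc _ = Real.exp ((1 + z) / 2 * l + (1 - z) / 2 * -l) := by congr 1; ring
    _ ≤ _ := this
    _ = _ := by ring

lemma br_mgf {β : Type*} [DecidableEq β] (A : Finset β) (z : β → ℝ) (hz : ∀ a ∈ A, |z a| ≤ 1)
    (h0 : ∑ a ∈ A, z a = 0) (k : ℕ) (l : ℝ) :
    ∑ p ∈ Fintype.piFinset (fun _ : Fin k => A), Real.exp (l * ∑ i, z (p i))
      ≤ (A.card : ℝ) ^ k * Real.exp (l ^ 2 / 2 * k) := by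
  have e : ∑ p ∈ Fintype.piFinset (fun _ : Fin k => A), Real.exp (l * ∑ i, z (p i))
      = (∑ a ∈ A, Real.exp (l * z a)) ^ k := by
    have := Finset.prod_univ_sum (fun _ : Fin k => A) (fun _ a => Real.exp (l * z a))
    simp only [Finset.prod_const, Finset.card_univ, Fintype.card_fin] at this
    rw [this]
    refine Finset.sum_congr rfl fun p _ => ?_
    rw [Finset.mul_sum, Real.exp_sum]
  rw [e, mul_comm (l ^ 2 / 2), Real.exp_nat_mul, ← mul_pow]
  refine pow_le_pow_left₀ (Finset.sum_nonneg fun _ _ => (Real.exp_pos _).le) ?_ _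
  calc _ ≤ ∑ a ∈ A, (Real.cosh l + z a * Real.sinh l) :=
        Finset.sum_le_sum fun a ha => br_exp_conv l _ (hz a ha)
    _ = A.card * Real.cosh l := by
        rw [Finset.sum_add_distrib, ← Finset.sum_mul, h0]; simp
    _ ≤ _ := by gcongr; exact Real.cosh_le_exp_half_sq l

lemma br_hoeffding {β : Type*} [DecidableEq β] (A : Finset β) (z : β → ℝ)
    (hz : ∀ a ∈ A, |z a| ≤ 1)
    (h0 : ∑ a ∈ A, z a = 0) (k : ℕ) (ε : ℝ) (hε : 0 ≤ ε) :
    (((Fintype.piFinset (fun _ : Fin k => A)).filter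
      (fun p => ε * k < |∑ i, z (p i)|)).card : ℝ)
      ≤ (A.card : ℝ) ^ k * (2 * Real.exp (-(ε ^ 2 / 2 * k))) := by
  set P := Fintype.piFinset (fun _ : Fin k => A)
  have h1 := br_mgf A z hz h0 k ε
  have h2 := br_mgf A z hz h0 k (-ε)
  rw [neg_sq] at h2
  have h3 : ((P.filter (fun p => ε * k < |∑ i, z (p i)|)).card : ℝ) * Real.exp (ε ^ 2 * k)
      ≤ ∑ p ∈ P, (Real.exp (ε * ∑ i, z (p i)) + Real.exp (-ε * ∑ i, z (p i))) := by
    rw [← nsmul_eq_mul, ← Finset.sum_const]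
    calc _ ≤ ∑ p ∈ P.filter (fun p => ε * k < |∑ i, z (p i)|),
          (Real.exp (ε * ∑ i, z (p i)) + Real.exp (-ε * ∑ i, z (p i))) := by
          refine Finset.sum_le_sum fun p hp => ?_
          have hp := (Finset.mem_filter.mp hp).2
          rcases le_total 0 (∑ i, z (p i)) with h | h
          · rw [abs_of_nonneg h] at hp
            have : Real.exp (ε ^ 2 * k) ≤ Real.exp (ε * ∑ i, z (p i)) :=
              Real.exp_le_exp.mpr (by nlinarith)
            have := Real.exp_pos (-ε * ∑ i, z (p i))
            linarith
          · rw [abs_of_nonpos h] at hp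
            have : Real.exp (ε ^ 2 * k) ≤ Real.exp (-ε * ∑ i, z (p i)) :=
              Real.exp_le_exp.mpr (by nlinarith)
            have := Real.exp_pos (ε * ∑ i, z (p i))
            linarith
      _ ≤ _ := Finset.sum_le_sum_of_subset_of_nonneg (Finset.filter_subset _ _)
          fun _ _ _ => by positivity
  rw [Finset.sum_add_distrib] at h3
  have h4 : Real.exp (ε ^ 2 * k) = Real.exp (ε ^ 2 / 2 * k) * Real.exp (ε ^ 2 / 2 * k) := by
    rw [← Real.exp_add]; congr 1; ring
  rw [h4] at h3
  rw [Real.exp_neg]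
  have hE := Real.exp_pos (ε ^ 2 / 2 * k)
  set E := Real.exp (ε ^ 2 / 2 * k)
  rw [← div_eq_mul_inv, ← mul_div_assoc, le_div_iff₀ hE]
  refine le_of_mul_le_mul_right ?_ hE
  linarith

lemma br_chang {n : ℕ} (X : Finset (Fin n → ZMod 2)) (hX : X.Nonempty) :
    ∃ Λ : Finset (Fin n → ZMod 2), (Λ.card : ℝ) ≤ 8 * Real.log (2 ^ n / X.card) ∧
      ∀ γ, (X.card : ℝ) / 2 ≤ |∑ x ∈ X, brChi γ x| →
        γ ∈ Submodule.span (ZMod 2) (Λ : Set (Fin n → ZMod 2)) := by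
  classical
  obtain ⟨b, hb, hspan, hli⟩ := exists_linearIndependent (ZMod 2)
    {γ : Fin n → ZMod 2 | (X.card : ℝ) / 2 ≤ |∑ x ∈ X, brChi γ x|}
  set Λ : Finset (Fin n → ZMod 2) := b.toFinite.toFinset with hΛ
  have hΛb : (Λ : Set (Fin n → ZMod 2)) = b := by simp [hΛ]
  refine ⟨Λ, ?_, fun γ hγ => by rw [hΛb, hspan]; exact Submodule.subset_span hγ⟩
  have hcard : (0:ℝ) < X.card := by exact_mod_cast hX.card_pos
  -- subset sums are nonzero
  have hsub : ∀ S ⊆ Λ, S ≠ ∅ → ∑ γ ∈ S, γ ≠ 0 := by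
    intro S hS hne h0
    have hli' : LinearIndepOn (ZMod 2) id (Λ : Set (Fin n → ZMod 2)) := by
      rw [hΛb]; exact hli
    rw [linearIndepOn_finset_iff] at hli'
    obtain ⟨γ, hγ⟩ := Finset.nonempty_iff_ne_empty.mpr hne
    have := hli' (fun γ => if γ ∈ S then 1 else 0) (by
      simp only [ite_smul, one_smul, zero_smul, id]
      rw [← Finset.sum_filter, Finset.filter_mem_eq_inter, Finset.inter_eq_right.mpr hS, h0])
      γ (hS hγ)
    simp [hγ] at this
  let c : (Fin n → ZMod 2) → ℝ := fun γ => if 0 ≤ ∑ x ∈ X, brChi γ x then 1 else -1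
  have hc : ∀ γ, c γ * ∑ x ∈ X, brChi γ x = |∑ x ∈ X, brChi γ x| := by
    intro γ
    by_cases h : 0 ≤ ∑ x ∈ X, brChi γ x
    · simp [c, h, abs_of_nonneg h]
    · simp [c, h, abs_of_neg (not_le.mp h)]
  have hcc : ∀ γ, c γ = 1 ∨ c γ = -1 := by
    intro γ; simp only [c]; split_ifs <;> simp
  have hmgf : ∑ x, Real.exp (∑ γ ∈ Λ, 1 / 2 * (c γ * brChi γ x))
      = 2 ^ n * Real.cosh (1 / 2) ^ Λ.card := by
    have e1 : ∀ x, Real.exp (∑ γ ∈ Λ, 1 / 2 * (c γ * brChi γ x))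
        = ∑ S ∈ Λ.powerset, Real.cosh (1/2) ^ S.card *
          ((∏ γ ∈ Λ \ S, (c γ * Real.sinh (1/2))) * brChi x (∑ γ ∈ Λ \ S, γ)) := by
      intro x
      rw [Real.exp_sum]
      rw [Finset.prod_congr rfl (g := fun γ => Real.cosh (1/2) +
        (c γ * Real.sinh (1/2)) * brChi x γ)]
      · rw [Finset.prod_add]
        refine Finset.sum_congr rfl fun S _ => ?_
        rw [Finset.prod_const, Finset.prod_mul_distrib, brChi_sum]
      · intro γ _
        rw [brChi_comm γ x]
        rcases hcc γ with h | h <;> rcases brChi_or x γ with h' | h' <;> rw [h, h', Real.cosh_eq, Real.sinh_eq] <;> ring_nf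
    simp_rw [e1]
    rw [Finset.sum_comm, Finset.sum_eq_single Λ]
    · simp [brChi_zero]
    · intro S hS hne
      rw [← Finset.mul_sum, ← Finset.mul_sum]
      simp_rw [fun x => brChi_comm x (∑ γ ∈ Λ \ S, γ)]
      rw [brChi_sum_univ]
      · simp
      · apply hsub _ Finset.sdiff_subset
        intro h
        exact hne (Finset.Subset.antisymm (Finset.mem_powerset.mp hS) (Finset.sdiff_eq_empty_iff_subset.mp h))
    · simp
  have hlow : X.card * Real.exp (Λ.card / 4) ≤
      ∑ x ∈ X, Real.exp (∑ γ ∈ Λ, 1 / 2 * (c γ * brChi γ x)) := by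
    have hu : X.card * ((Λ.card : ℝ) / 4) ≤ ∑ x ∈ X, ∑ γ ∈ Λ, 1 / 2 * (c γ * brChi γ x) := by
      rw [Finset.sum_comm]
      have : ∀ γ ∈ Λ, (X.card : ℝ) / 4 ≤ ∑ x ∈ X, 1 / 2 * (c γ * brChi γ x) := by
        intro γ hγ
        rw [← Finset.mul_sum, ← Finset.mul_sum, hc]
        have : (X.card : ℝ) / 2 ≤ |∑ x ∈ X, brChi γ x| := hb (by rw [← hΛb]; exact hγ)
        linarith
      have := Finset.sum_le_sum this
      rw [Finset.sum_const, nsmul_eq_mul] at this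
      linarith
    calc _ ≤ ∑ x ∈ X, Real.exp (Λ.card / 4) *
          (1 + ((∑ γ ∈ Λ, 1 / 2 * (c γ * brChi γ x)) - Λ.card / 4)) := by
          rw [← Finset.mul_sum, mul_comm]
          refine mul_le_mul_of_nonneg_left ?_ (Real.exp_pos _).le
          rw [Finset.sum_add_distrib, Finset.sum_sub_distrib]
          simp only [Finset.sum_const, nsmul_eq_mul]
          linarith
      _ ≤ _ := by
          refine Finset.sum_le_sum fun x _ => ?_
          have := Real.add_one_le_exp ((∑ γ ∈ Λ, 1 / 2 * (c γ * brChi γ x)) - Λ.card / 4)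
          calc _ ≤ Real.exp (Λ.card / 4) *
              Real.exp ((∑ γ ∈ Λ, 1 / 2 * (c γ * brChi γ x)) - Λ.card / 4) := by
                gcongr; linarith
            _ = _ := by rw [← Real.exp_add]; congr 1; ring
  have hup : ∑ x ∈ X, Real.exp (∑ γ ∈ Λ, 1 / 2 * (c γ * brChi γ x)) ≤
      2 ^ n * Real.exp (Λ.card / 8) := by
    calc _ ≤ ∑ x, Real.exp (∑ γ ∈ Λ, 1 / 2 * (c γ * brChi γ x)) :=
          Finset.sum_le_sum_of_subset_of_nonneg (Finset.subset_univ _) fun _ _ _ => (Real.exp_pos _).le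
      _ = _ := hmgf
      _ ≤ 2 ^ n * Real.exp ((1/2)^2/2) ^ Λ.card := by
          gcongr
          exact Real.cosh_le_exp_half_sq _
      _ = _ := by rw [← Real.exp_nat_mul]; congr 2; ring
  have h := hlow.trans hup
  have h8 : Real.exp ((Λ.card : ℝ) / 4) = Real.exp (Λ.card / 8) * Real.exp (Λ.card / 8) := by
    rw [← Real.exp_add]; congr 1; ring
  have : Real.exp ((Λ.card : ℝ) / 8) ≤ 2 ^ n / X.card := by
    rw [le_div_iff₀ hcard]
    refine le_of_mul_le_mul_right ?_ (Real.exp_pos ((Λ.card : ℝ) / 8))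
    rw [h8] at h
    linarith
  have := (Real.le_log_iff_exp_le (by positivity)).mpr this
  linarith

lemma br_markov {β γ : Type*} (P : Finset β) (Y : Finset γ) (R : β → γ → Prop)
    [∀ p y, Decidable (R p y)] (w η : ℝ) (hη : 0 < η) (hY : 0 < (Y.card : ℝ)) (hw : 2 * w ≤ η)
    (h : ∀ y ∈ Y, ((P.filter (fun p => R p y)).card : ℝ) ≤ P.card * w) :
    (P.card : ℝ) / 2 ≤ ((P.filter
      (fun p => ((Y.filter (fun y => R p y)).card : ℝ) ≤ η * Y.card)).card : ℝ) := by
  classical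
  have h1 : ∑ p ∈ P, ((Y.filter (fun y => R p y)).card : ℝ)
      = ∑ y ∈ Y, ((P.filter (fun p => R p y)).card : ℝ) := by
    simp only [Finset.card_filter, Nat.cast_sum]
    exact Finset.sum_comm
  have h2 := Finset.sum_le_sum h
  rw [← h1, Finset.sum_const, nsmul_eq_mul] at h2
  have h3 : ((P.filter
      (fun p => ¬ ((Y.filter (fun y => R p y)).card : ℝ) ≤ η * Y.card)).card : ℝ) * (η * Y.card)
      ≤ ∑ p ∈ P, ((Y.filter (fun y => R p y)).card : ℝ) := by
    rw [← nsmul_eq_mul, ← Finset.sum_const]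
    calc _ ≤ ∑ p ∈ P.filter (fun p => ¬ ((Y.filter (fun y => R p y)).card : ℝ) ≤ η * Y.card),
          ((Y.filter (fun y => R p y)).card : ℝ) :=
          Finset.sum_le_sum fun p hp => (not_le.mp (Finset.mem_filter.mp hp).2).le
      _ ≤ _ := Finset.sum_le_sum_of_subset_of_nonneg (Finset.filter_subset _ _)
          fun _ _ _ => by positivity
  have h4 := Finset.card_filter_add_card_filter_not (s := P)
    (fun p => ((Y.filter (fun y => R p y)).card : ℝ) ≤ η * Y.card)
  have h4' : ((P.filter (fun p => ((Y.filter (fun y => R p y)).card : ℝ) ≤ η * Y.card)).card : ℝ)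
    + ((P.filter (fun p => ¬ ((Y.filter (fun y => R p y)).card : ℝ) ≤ η * Y.card)).card : ℝ)
    = P.card := by exact_mod_cast h4
  have h5 := h3.trans h2
  have h6 : ((P.filter
      (fun p => ¬ ((Y.filter (fun y => R p y)).card : ℝ) ≤ η * Y.card)).card : ℝ) ≤ P.card / 2 := by
    refine le_of_mul_le_mul_right ?_ (mul_pos hη hY)
    have : (P.card : ℝ) * Y.card * (2 * w) ≤ P.card * Y.card * η := by gcongr
    linarith
  linarith

lemma br_croot_sisask {n : ℕ} (A : Finset (Fin n → ZMod 2)) (hA : A.Nonempty)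
    (g : (Fin n → ZMod 2) → ℝ) (hg0 : ∀ y, 0 ≤ g y) (hg1 : ∀ y, g y ≤ 1)
    (k : ℕ) (hk : 0 < k) (ε η : ℝ) (hε : 0 ≤ ε) (hη : 4 * Real.exp (-(ε ^ 2 / 2 * k)) ≤ η)
    (F : (Fin n → ZMod 2) → ℝ) (hF : ∀ y, F y = (∑ a ∈ A, g (y + a)) / A.card) :
    ∃ X : Finset (Fin n → ZMod 2), X.Nonempty ∧
      (A.card : ℝ) ^ k * 2 ^ n / (2 * (2 ^ n) ^ k) ≤ X.card ∧
      ∀ x ∈ X, ((Finset.univ.filter (fun y => 2 * ε < |F (y + x) - F y|)).card : ℝ)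
        ≤ 2 * (η * 2 ^ n) := by
  classical
  have hAc : (0:ℝ) < A.card := by exact_mod_cast hA.card_pos
  have hk' : (0:ℝ) < k := by exact_mod_cast hk
  have hηp : 0 < η := lt_of_lt_of_le (by positivity) hη
  have hN : ((Finset.univ : Finset (Fin n → ZMod 2)).card : ℝ) = 2 ^ n := by simp
  set P := Fintype.piFinset (fun _ : Fin k => A) with hP
  have hPc : (P.card : ℝ) = (A.card : ℝ) ^ k := by simp [hP]
  let R : (Fin k → Fin n → ZMod 2) → (Fin n → ZMod 2) → Prop :=
    fun p y => ε * k < |∑ i, (g (y + p i) - F y)|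
  have hF0 : ∀ y, 0 ≤ F y := fun y => by
    rw [hF]; exact div_nonneg (Finset.sum_nonneg fun _ _ => hg0 _) hAc.le
  have hF1 : ∀ y, F y ≤ 1 := fun y => by
    rw [hF, div_le_one hAc]
    calc _ ≤ ∑ a ∈ A, (1:ℝ) := Finset.sum_le_sum fun _ _ => hg1 _
      _ = _ := by simp
  have hR : ∀ y ∈ (Finset.univ : Finset (Fin n → ZMod 2)),
      ((P.filter (fun p => R p y)).card : ℝ) ≤ P.card * (2 * Real.exp (-(ε ^ 2 / 2 * k))) := by
    intro y _
    rw [hPc]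
    refine br_hoeffding A (fun a => g (y + a) - F y) ?_ ?_ k ε hε
    · intro a _
      rw [abs_le]
      constructor <;> linarith [hg0 (y + a), hg1 (y + a), hF0 y, hF1 y]
    · rw [Finset.sum_sub_distrib, Finset.sum_const, nsmul_eq_mul, hF]
      field_simp
      ring
  have hL := br_markov P Finset.univ R _ η hηp (by rw [hN]; positivity)
    (by linarith : 2 * (2 * Real.exp (-(ε ^ 2 / 2 * k))) ≤ η) hR
  set L := P.filter (fun p => (((Finset.univ : Finset (Fin n → ZMod 2)).filter
    (fun y => R p y)).card : ℝ) ≤ η * (Finset.univ : Finset (Fin n → ZMod 2)).card) with hLdef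
  -- double counting
  let X0 : (Fin k → Fin n → ZMod 2) → Finset (Fin n → ZMod 2) :=
    fun c => Finset.univ.filter (fun x => (c + fun _ => x) ∈ L)
  have hdc : ∑ c, ((X0 c).card : ℝ) = 2 ^ n * L.card := by
    simp only [X0, Finset.card_filter, Nat.cast_sum]
    rw [Finset.sum_comm]
    have : ∀ x : Fin n → ZMod 2, ∑ c : Fin k → Fin n → ZMod 2,
        (((if (c + fun _ => x) ∈ L then 1 else 0 : ℕ)) : ℝ) = L.card := by
      intro x
      refine (Equiv.sum_comp (Equiv.addRight (fun _ : Fin k => x))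
        (fun c => (((if c ∈ L then 1 else 0 : ℕ)) : ℝ))).trans ?_
      simp
    simp_rw [this]
    simp
  obtain ⟨c, -, hc⟩ : ∃ c ∈ (Finset.univ : Finset (Fin k → Fin n → ZMod 2)),
      (A.card : ℝ) ^ k * 2 ^ n / (2 * (2 ^ n) ^ k) ≤ ((X0 c).card : ℝ) := by
    refine Finset.exists_le_of_sum_le Finset.univ_nonempty ?_
    rw [hdc, Finset.sum_const, nsmul_eq_mul]
    have : ((Finset.univ : Finset (Fin k → Fin n → ZMod 2)).card : ℝ) = (2 ^ n) ^ k := by simp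
    rw [this]
    rw [hPc] at hL
    calc _ = 2 ^ n * ((A.card : ℝ) ^ k / 2) := by field_simp
      _ ≤ _ := by gcongr
  have hpos : (0:ℝ) < (X0 c).card := lt_of_lt_of_le (by positivity) hc
  obtain ⟨x0, hx0⟩ := Finset.card_pos.mp (by exact_mod_cast hpos : 0 < (X0 c).card)
  refine ⟨(X0 c).image (fun x => x0 + x), ⟨_, Finset.mem_image_of_mem _ hx0⟩, ?_, ?_⟩
  · rwa [Finset.card_image_of_injective _ (add_right_injective x0)]
  intro x hx
  obtain ⟨x1, hx1, rfl⟩ := Finset.mem_image.mp hx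
  have hl0 := (Finset.mem_filter.mp (Finset.mem_filter.mp hx0).2).2
  have hl1 := (Finset.mem_filter.mp (Finset.mem_filter.mp hx1).2).2
  rw [hN] at hl0 hl1
  have hsub : Finset.univ.filter (fun y => 2 * ε < |F (y + (x0 + x1)) - F y|) ⊆
      (Finset.univ.filter (fun y => R (c + fun _ => x0) y)).image (fun y => y + (x0 + x1)) ∪
      Finset.univ.filter (fun y => R (c + fun _ => x1) y) := by
    intro y hy
    have hy := (Finset.mem_filter.mp hy).2
    by_contra hcon
    rw [Finset.mem_union, not_or] at hcon
    obtain ⟨h0, h1⟩ := hcon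
    have h0' : ¬ R (c + fun _ => x0) (y + (x0 + x1)) := by
      intro hr
      apply h0
      refine Finset.mem_image.mpr ⟨y + (x0 + x1), by simpa using hr, ?_⟩
      rw [add_assoc, br_add_self, add_zero]
    have h1' : ¬ R (c + fun _ => x1) y := by
      intro hr; apply h1; simpa using hr
    simp only [R, not_lt, Finset.sum_sub_distrib, Finset.sum_const, Finset.card_univ,
      Fintype.card_fin, nsmul_eq_mul, Pi.add_apply] at h0' h1'
    have e : ∀ i, y + (x0 + x1) + (c i + x0) = y + (c i + x1) := by
      intro i
      calc _ = y + (c i + x1) + (x0 + x0) := by abel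
        _ = _ := by rw [br_add_self, add_zero]
    simp_rw [e] at h0'
    have h2 : k * (2 * ε) < k * |F (y + (x0 + x1)) - F y| := by gcongr
    rw [← abs_of_pos hk', ← abs_mul, abs_of_pos hk', mul_sub] at h2
    rw [abs_le] at h0' h1'
    rcases lt_abs.mp h2 with h | h <;> linarith [h0'.1, h0'.2, h1'.1, h1'.2]
  have h1 := Finset.card_le_card hsub
  have h2 := h1.trans (Finset.card_union_le _ _)
  rw [Finset.card_image_of_injective _ (add_left_injective _)] at h2
  have h3 : ((Finset.univ.filter (fun y => 2 * ε < |F (y + (x0 + x1)) - F y|)).card : ℝ) ≤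
     ((Finset.univ.filter (fun y => R (c + fun _ => x0) y)).card : ℝ) +
     ((Finset.univ.filter (fun y => R (c + fun _ => x1) y)).card : ℝ) := by exact_mod_cast h2
  linarith

lemma br_iter {n : ℕ} (X : Finset (Fin n → ZMod 2)) (F : (Fin n → ZMod 2) → ℝ) (D B : ℝ)
    (h : ∀ x ∈ X, ((Finset.univ.filter (fun y => D < |F (y + x) - F y|)).card : ℝ) ≤ B)
    (t : ℕ) (p : Fin t → Fin n → ZMod 2) (hp : ∀ i, p i ∈ X) :
    ((Finset.univ.filter (fun y => t * D < |F (y + ∑ i, p i) - F y|)).card : ℝ) ≤ t * B := by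
  classical
  induction t with
  | zero => simp
  | succ t ih =>
    have h1 := ih (fun i => p i.succ) (fun i => hp _)
    have h0 := h (p 0) (hp 0)
    rw [Fin.sum_univ_succ]
    set s := ∑ i : Fin t, p i.succ
    have hsub : Finset.univ.filter (fun y => ((t + 1 : ℕ) : ℝ) * D < |F (y + (p 0 + s)) - F y|) ⊆
      (Finset.univ.filter (fun y => t * D < |F (y + s) - F y|)).image (fun y => y + p 0) ∪
      Finset.univ.filter (fun y => D < |F (y + p 0) - F y|) := by
      intro y hy
      have hy := (Finset.mem_filter.mp hy).2
      by_contra hcon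
      rw [Finset.mem_union, not_or] at hcon
      obtain ⟨h0, h1⟩ := hcon
      have h0' : ¬ (t * D < |F (y + p 0 + s) - F (y + p 0)|) := by
        intro hr
        apply h0
        refine Finset.mem_image.mpr ⟨y + p 0, by simpa using hr, ?_⟩
        rw [add_assoc, br_add_self, add_zero]
      have h1' : ¬ (D < |F (y + p 0) - F y|) := by
        intro hr; apply h1; simpa using hr
      rw [← add_assoc] at hy
      push_cast at hy
      have := abs_sub_le (F (y + p 0 + s)) (F (y + p 0)) (F y)
      linarith
    have h2 := (Finset.card_le_card hsub).trans (Finset.card_union_le _ _)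
    rw [Finset.card_image_of_injective _ (add_left_injective _)] at h2
    have h3 : ((Finset.univ.filter
        (fun y => ((t + 1 : ℕ) : ℝ) * D < |F (y + (p 0 + s)) - F y|)).card : ℝ) ≤
      ((Finset.univ.filter (fun y => t * D < |F (y + s) - F y|)).card : ℝ) +
      ((Finset.univ.filter (fun y => D < |F (y + p 0) - F y|)).card : ℝ) := by exact_mod_cast h2
    push_cast at h3 ⊢
    linarith

lemma br_avg {n : ℕ} (A : Finset (Fin n → ZMod 2)) (F : (Fin n → ZMod 2) → ℝ) (D B : ℝ)
    (hD : 0 ≤ D)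
    (hF0 : ∀ y, 0 ≤ F y) (hFA : ∀ a ∈ A, F a = 1) (s : Fin n → ZMod 2)
    (h : ((Finset.univ.filter (fun y => D < |F (y + s) - F y|)).card : ℝ) ≤ B) :
    (A.card : ℝ) - A.card * D - B ≤ ∑ a ∈ A, F (a + s) := by
  classical
  have h1 : ∀ a ∈ A, 1 - D - (if D < |F (a + s) - F a| then 1 else 0) ≤ F (a + s) := by
    intro a ha
    split_ifs with hlt
    · linarith [hF0 (a + s)]
    · have := (abs_le.mp (not_lt.mp hlt)).1
      rw [hFA a ha] at this
      linarith
  have h2 := Finset.sum_le_sum h1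
  rw [Finset.sum_sub_distrib, Finset.sum_const, nsmul_eq_mul, Finset.sum_boole] at h2
  have h3 : ((A.filter (fun a => D < |F (a + s) - F a|)).card : ℝ) ≤
      ((Finset.univ.filter (fun y => D < |F (y + s) - F y|)).card : ℝ) := by
    exact_mod_cast Finset.card_le_card (Finset.filter_subset_filter _ (Finset.subset_univ _))
  linarith

lemma br_parseval {n : ℕ} (A : Finset (Fin n → ZMod 2)) :
    ∑ γ : Fin n → ZMod 2, (∑ a ∈ A, brChi γ a) ^ 2 = 2 ^ n * A.card := by
  simp_rw [sq, Finset.sum_mul_sum]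
  rw [Finset.sum_comm]
  simp_rw [Finset.sum_comm (s := Finset.univ) (t := A), brChi_sum_univ']
  simp [mul_comm]

noncomputable def brT {n : ℕ} (A X : Finset (Fin n → ZMod 2)) (t : ℕ)
    (h : (Fin n → ZMod 2) → ℝ) (v : Fin n → ZMod 2) : ℝ :=
  ∑ p ∈ Fintype.piFinset (fun _ : Fin t => X), ∑ a ∈ A, ∑ b ∈ A, h (a + ∑ i, p i + b + v)

lemma br_fourier {n : ℕ} (A X : Finset (Fin n → ZMod 2)) (t : ℕ)
    (h : (Fin n → ZMod 2) → ℝ) (v : Fin n → ZMod 2) :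
    2 ^ n * brT A X t h v = ∑ γ, (∑ y, h y * brChi γ y) * brChi γ v *
      (∑ a ∈ A, brChi γ a) ^ 2 * (∑ x ∈ X, brChi γ x) ^ t := by
  classical
  have inv : ∀ z, 2 ^ n * h z = ∑ γ, (∑ y, h y * brChi γ y) * brChi γ z := by
    intro z
    simp_rw [Finset.sum_mul]
    rw [Finset.sum_comm]
    simp_rw [mul_assoc, ← Finset.mul_sum, brChi_sum_univ']
    simp [mul_comm]
  have hX : ∀ γ, (∑ x ∈ X, brChi γ x) ^ t =
      ∑ p ∈ Fintype.piFinset (fun _ : Fin t => X), brChi γ (∑ i, p i) := by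
    intro γ
    have := Finset.prod_univ_sum (fun _ : Fin t => X) (fun _ a => brChi γ a)
    simp only [Finset.prod_const, Finset.card_univ, Fintype.card_fin] at this
    rw [this]
    exact Finset.sum_congr rfl fun p _ => (brChi_sum _ _ _).symm
  unfold brT
  simp_rw [Finset.mul_sum, inv, hX, sq, Finset.sum_mul_sum]
  simp_rw [Finset.sum_comm (s := A) (t := Finset.univ)]
  rw [Finset.sum_comm]
  refine Finset.sum_congr rfl fun γ _ => ?_
  rw [Finset.mul_sum]
  refine Finset.sum_congr rfl fun p _ => ?_
  simp_rw [Finset.mul_sum, Finset.sum_mul, brChi_add]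
  refine Finset.sum_congr rfl fun a _ => ?_
  refine Finset.sum_congr rfl fun b _ => ?_
  refine Finset.sum_congr rfl fun y _ => ?_
  ring

lemma br_diff {n : ℕ} (A X : Finset (Fin n → ZMod 2)) (t : ℕ)
    (h : (Fin n → ZMod 2) → ℝ) (hh0 : ∀ y, 0 ≤ h y) (hh1 : ∀ y, h y ≤ 1) (v : Fin n → ZMod 2)
    (hv : ∀ γ, (X.card : ℝ) / 2 ≤ |∑ x ∈ X, brChi γ x| → brChi γ v = 1) :
    |brT A X t h v - brT A X t h 0| ≤ 2 * 2 ^ n * A.card * (X.card / 2) ^ t := by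
  have hN : (0:ℝ) < 2 ^ n := by positivity
  refine le_of_mul_le_mul_left ?_ hN
  calc 2 ^ n * |brT A X t h v - brT A X t h 0|
      = |2 ^ n * brT A X t h v - 2 ^ n * brT A X t h 0| := by
        rw [← mul_sub, abs_mul, abs_of_pos hN]
    _ = |∑ γ, (∑ y, h y * brChi γ y) * (brChi γ v - 1) *
      (∑ a ∈ A, brChi γ a) ^ 2 * (∑ x ∈ X, brChi γ x) ^ t| := by
        rw [br_fourier, br_fourier, ← Finset.sum_sub_distrib]
        congr 1
        refine Finset.sum_congr rfl fun γ _ => ?_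
        rw [brChi_zero]; ring
    _ ≤ ∑ γ, |(∑ y, h y * brChi γ y) * (brChi γ v - 1) *
      (∑ a ∈ A, brChi γ a) ^ 2 * (∑ x ∈ X, brChi γ x) ^ t| := Finset.abs_sum_le_sum_abs _ _
    _ ≤ ∑ γ : Fin n → ZMod 2, (2 ^ n * 2 * (X.card / 2 : ℝ) ^ t) * (∑ a ∈ A, brChi γ a) ^ 2 := by
        refine Finset.sum_le_sum fun γ _ => ?_
        by_cases hγ : (X.card : ℝ) / 2 ≤ |∑ x ∈ X, brChi γ x|
        · rw [hv γ hγ]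
          simp
          positivity
        · have hH : |∑ y, h y * brChi γ y| ≤ 2 ^ n := by
            calc _ ≤ ∑ y, |h y * brChi γ y| := Finset.abs_sum_le_sum_abs _ _
              _ ≤ ∑ y : Fin n → ZMod 2, (1:ℝ) := by
                refine Finset.sum_le_sum fun y _ => ?_
                rw [abs_mul, brChi_abs, mul_one, abs_of_nonneg (hh0 y)]
                exact hh1 y
              _ = 2 ^ n := by simp
          have h2 : |brChi γ v - 1| ≤ 2 := by
            rcases brChi_or γ v with h | h <;> rw [h] <;> norm_num
          rw [abs_mul, abs_mul, abs_mul, abs_pow (∑ x ∈ X, brChi γ x), abs_of_nonneg (sq_nonneg (∑ a ∈ A, brChi γ a))]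
          have h3 := (not_le.mp hγ).le
          calc _ ≤ 2 ^ n * 2 * (∑ a ∈ A, brChi γ a) ^ 2 * (X.card / 2 : ℝ) ^ t := by gcongr
            _ = _ := by ring
    _ = _ := by rw [← Finset.mul_sum, br_parseval]; ring

/-- combinatorial core with free parameters -/
lemma br_core {n : ℕ} (A : Finset (Fin n → ZMod 2)) (hA : A.Nonempty) (α : ℝ) (hα : 0 < α)
    (hAα : α * 2 ^ n ≤ (A.card : ℝ)) (t k : ℕ) (ht : 0 < t) (hk : 0 < k)
    (h2t : 16 / α ≤ 2 ^ t)
    (hexp : 4 * Real.exp (-((1 / (16 * t : ℝ)) ^ 2 / 2 * k)) ≤ α / (16 * t)) :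
    ∃ V : Submodule (ZMod 2) (Fin n → ZMod 2),
      (∀ v ∈ V, v ∈ A + A + A + A) ∧
      (n : ℝ) - Module.finrank (ZMod 2) V ≤ 8 * (k * Real.log (1 / α) + Real.log 2) := by
  classical
  have hAc : (0:ℝ) < A.card := by exact_mod_cast hA.card_pos
  have ht' : (0:ℝ) < t := by exact_mod_cast ht
  have hN : (0:ℝ) < 2 ^ n := by positivity
  let h : (Fin n → ZMod 2) → ℝ := fun y => if y ∈ A + A then 1 else 0
  have hh0 : ∀ y, 0 ≤ h y := fun y => by simp only [h]; split_ifs <;> norm_num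
  have hh1 : ∀ y, h y ≤ 1 := fun y => by simp only [h]; split_ifs <;> norm_num
  let F : (Fin n → ZMod 2) → ℝ := fun y => (∑ a ∈ A, h (y + a)) / A.card
  have hF0 : ∀ y, 0 ≤ F y := fun y => div_nonneg (Finset.sum_nonneg fun _ _ => hh0 _) hAc.le
  have hFA : ∀ a ∈ A, F a = 1 := by
    intro a ha
    simp only [F]
    rw [div_eq_one_iff_eq hAc.ne']
    rw [Finset.sum_congr rfl (g := fun _ => (1:ℝ))]
    · simp
    · intro b hb
      simp [h, Finset.add_mem_add ha hb]
  obtain ⟨X, hXne, hXc, hX⟩ := br_croot_sisask A hA h hh0 hh1 k hk (1 / (16 * t)) (α / (16 * t))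
    (by positivity) hexp F (fun _ => rfl)
  have hXp : (0:ℝ) < X.card := by exact_mod_cast hXne.card_pos
  obtain ⟨Λ, hΛ, hspan⟩ := br_chang X hXne
  -- T(0) is large
  have hT0 : 3 / 4 * ((A.card : ℝ) ^ 2 * (X.card : ℝ) ^ t) ≤ brT A X t h 0 := by
    have : ∀ p ∈ Fintype.piFinset (fun _ : Fin t => X), 3 / 4 * (A.card : ℝ) ^ 2 ≤
        ∑ a ∈ A, ∑ b ∈ A, h (a + ∑ i, p i + b + 0) := by
      intro p hp
      have hp := Fintype.mem_piFinset.mp hp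
      have h1 := br_iter X F _ _ hX t p hp
      have h2 := br_avg A F _ _ (by positivity) hF0 hFA _ h1
      have e1 : (t : ℝ) * (2 * (1 / (16 * t))) = 1 / 8 := by field_simp; norm_num
      have e2 : (t : ℝ) * (2 * (α / (16 * t) * 2 ^ n)) = α * 2 ^ n / 8 := by field_simp; norm_num
      rw [e1, e2] at h2
      have h3 : 3 / 4 * (A.card : ℝ) ≤ ∑ a ∈ A, F (a + ∑ i, p i) := by linarith
      simp only [F] at h3
      rw [← Finset.sum_div, le_div_iff₀ hAc] at h3
      simp only [add_zero]
      linarith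
    have := Finset.sum_le_sum this
    rw [Finset.sum_const, nsmul_eq_mul] at this
    have hc : ((Fintype.piFinset (fun _ : Fin t => X)).card : ℝ) = (X.card : ℝ) ^ t := by simp
    rw [hc] at this
    unfold brT
    linarith
  let M : (Fin n → ZMod 2) →ₗ[ZMod 2] (Λ → ZMod 2) :=
    Matrix.mulVecLin (Matrix.of fun (γ : Λ) => (γ : Fin n → ZMod 2))
  refine ⟨LinearMap.ker M, ?_, ?_⟩
  · intro v hv
    have hv0 : ∀ γ ∈ Λ, γ ⬝ᵥ v = 0 := by
      intro γ hγ
      exact congrFun (LinearMap.mem_ker.mp hv) ⟨γ, hγ⟩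
    have hvs : ∀ γ ∈ Submodule.span (ZMod 2) (Λ : Set (Fin n → ZMod 2)), γ ⬝ᵥ v = 0 := by
      intro γ hγ
      induction hγ using Submodule.span_induction with
      | mem x hx => exact hv0 x hx
      | zero => simp
      | add x y _ _ hx hy => rw [add_dotProduct, hx, hy, add_zero]
      | smul a x _ hx => rw [smul_dotProduct, hx, smul_zero]
    have hd := br_diff A X t h hh0 hh1 v (fun γ hγ => by
      simp [brChi, brSgn, hvs γ (hspan γ hγ)])
    have hd2 : 2 * 2 ^ n * (A.card : ℝ) * (X.card / 2 : ℝ) ^ t ≤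
        1 / 8 * ((A.card : ℝ) ^ 2 * (X.card : ℝ) ^ t) := by
      rw [div_pow]
      have : 2 * 2 ^ n * (A.card : ℝ) * ((X.card : ℝ) ^ t / 2 ^ t) =
        (2 * 2 ^ n / 2 ^ t) * ((A.card : ℝ) * (X.card : ℝ) ^ t) := by ring
      rw [this]
      have : 2 * 2 ^ n / 2 ^ t ≤ 1 / 8 * (A.card : ℝ) := by
        rw [div_le_iff₀ (by positivity)]
        rw [div_le_iff₀ hα] at h2t
        have : (16:ℝ) * 2 ^ n ≤ 2 ^ t * α * 2 ^ n := by gcongr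
        have : 2 ^ t * (α * 2 ^ n) ≤ 2 ^ t * (A.card : ℝ) := by gcongr
        linarith
      calc _ ≤ (1 / 8 * (A.card : ℝ)) * ((A.card : ℝ) * (X.card : ℝ) ^ t) := by gcongr
        _ = _ := by ring
    by_contra hcon
    have hsum : brT A X t h 0 + brT A X t h v ≤ (A.card : ℝ) ^ 2 * (X.card : ℝ) ^ t := by
      unfold brT
      simp_rw [← Finset.sum_add_distrib]
      calc _ ≤ ∑ p ∈ Fintype.piFinset (fun _ : Fin t => X), ∑ a ∈ A, ∑ b ∈ A, (1:ℝ) := by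
            refine Finset.sum_le_sum fun p _ => Finset.sum_le_sum fun a _ =>
              Finset.sum_le_sum fun b _ => ?_
            set z := a + ∑ i, p i + b
            have : ¬ (z + 0 ∈ A + A ∧ z + v ∈ A + A) := by
              rintro ⟨h1, h2⟩
              apply hcon
              have h3 := Finset.add_mem_add h1 h2
              have : z + 0 + (z + v) = v := by
                calc _ = (z + z) + v := by abel
                  _ = v := by rw [br_add_self, zero_add]
              rw [this] at h3
              rwa [add_assoc (A + A)]
            simp only [h]
            split_ifs <;> first | (exfalso; tauto) | norm_num
        _ = _ := by simp; ring
    have h1 := (abs_le.mp hd).1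
    have : 0 < (A.card : ℝ) ^ 2 * (X.card : ℝ) ^ t := by positivity
    linarith
  · have hrk := LinearMap.finrank_range_add_finrank_ker M
    have hle := Submodule.finrank_le (LinearMap.range M)
    simp only [Module.finrank_fintype_fun_eq_card, Fintype.card_fin, Fintype.card_coe] at hrk hle
    have h1 : (n : ℝ) ≤ Λ.card + Module.finrank (ZMod 2) (LinearMap.ker M) := by
      exact_mod_cast (by omega : n ≤ Λ.card + Module.finrank (ZMod 2) (LinearMap.ker M))
    have h2 : Real.log (2 ^ n / X.card) ≤ k * Real.log (1 / α) + Real.log 2 := by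
      have : (2:ℝ) ^ n / X.card ≤ (1 / α) ^ k * 2 := by
        rw [div_le_iff₀ hXp]
        have h3 : α ^ k * 2 ^ n / 2 ≤ X.card := by
          refine le_trans ?_ hXc
          have : (α * 2 ^ n) ^ k ≤ (A.card : ℝ) ^ k := by gcongr
          calc _ = (α * 2 ^ n) ^ k * 2 ^ n / (2 * (2 ^ n) ^ k) := by rw [mul_pow]; field_simp
            _ ≤ _ := by gcongr
        calc (2:ℝ) ^ n = (1 / α) ^ k * 2 * (α ^ k * 2 ^ n / 2) := by
              rw [one_div, inv_pow]; field_simp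
          _ ≤ _ := by gcongr
      calc _ ≤ Real.log ((1 / α) ^ k * 2) := Real.log_le_log (by positivity) this
        _ = _ := by rw [Real.log_mul (by positivity) (by norm_num), Real.log_pow]
    linarith

theorem quasipolynomial_bogolyubov_ruzsa :
    ∃ C : ℝ, 0 < C ∧
      ∀ (n : ℕ) (α : ℝ), 0 < α → α ≤ 1 →
        ∀ A : Finset (Fin n → ZMod 2), α * 2 ^ n ≤ (A.card : ℝ) →
          ∃ V : Submodule (ZMod 2) (Fin n → ZMod 2),
            (∀ v ∈ V, v ∈ A + A + A + A) ∧
            (n : ℝ) - Module.finrank (ZMod 2) V ≤ C * (Real.logb 2 (2 / α)) ^ 4 := by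
  refine ⟨2000000, by norm_num, ?_⟩
  intro n α hα hα1 A hAα
  have hAc : (0:ℝ) < A.card := lt_of_lt_of_le (by positivity) hAα
  have hA : A.Nonempty := Finset.card_pos.mp (by exact_mod_cast hAc)
  set L := Real.logb 2 (2 / α) with hL
  have h2α : (2:ℝ) ≤ 2 / α := by rw [le_div_iff₀ hα]; linarith
  have hL1 : 1 ≤ L := by
    rw [hL, Real.le_logb_iff_rpow_le (by norm_num) (by positivity)]
    simpa using h2α
  have hlog2 : Real.log 2 ≤ 1 := by linarith [Real.log_two_lt_d9]
  have hlog2' : 0 < Real.log 2 := Real.log_pos (by norm_num)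
  have hlogL : Real.log (2 / α) ≤ L := by
    have : L * Real.log 2 = Real.log (2 / α) := by
      rw [hL, Real.logb]; field_simp
    nlinarith
  have h2L : (2:ℝ) ^ L = 2 / α := Real.rpow_logb (by norm_num) (by norm_num) (by positivity)
  obtain ⟨t, ht⟩ : ∃ t : ℕ, t = ⌈L⌉₊ + 3 := ⟨_, rfl⟩
  have ht0 : 0 < t := by omega
  have ht1 : L + 3 ≤ t := by
    rw [ht]; push_cast; linarith [Nat.le_ceil L]
  have ht2 : (t:ℝ) ≤ 5 * L := by
    rw [ht]; push_cast; linarith [Nat.ceil_lt_add_one (by linarith : 0 ≤ L)]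
  have ht' : (0:ℝ) < t := by exact_mod_cast ht0
  have h2t : 16 / α ≤ 2 ^ t := by
    calc 16 / α = (2:ℝ) ^ (L + 3) := by
          rw [Real.rpow_add (by norm_num), h2L]
          norm_num
          ring
      _ ≤ (2:ℝ) ^ (t : ℝ) := Real.rpow_le_rpow_of_exponent_le (by norm_num) ht1
      _ = _ := Real.rpow_natCast _ _
  set W := Real.log (64 * t / α) with hW
  have hW11 : W ≤ 11 * L := by
    have e : 64 * (t:ℝ) / α = 2 ^ 5 * t * (2 / α) := by ring
    rw [hW, e, Real.log_mul (by positivity) (by positivity), Real.log_mul (by positivity) (by positivity),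
      Real.log_pow]
    have := Real.log_le_sub_one_of_pos ht'
    push_cast
    linarith
  have hW0 : 0 < W := by
    apply Real.log_pos
    rw [lt_div_iff₀ hα]
    linarith
  obtain ⟨k, hk⟩ : ∃ k : ℕ, k = ⌈512 * (t:ℝ) ^ 2 * W⌉₊ := ⟨_, rfl⟩
  have hk0 : 0 < k := by rw [hk]; exact Nat.ceil_pos.mpr (by positivity)
  have hk1 : 512 * (t:ℝ) ^ 2 * W ≤ k := by rw [hk]; exact Nat.le_ceil _
  have hk2 : (k:ℝ) ≤ 140801 * L ^ 3 := by
    have h1 : (k:ℝ) < 512 * (t:ℝ) ^ 2 * W + 1 := by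
      rw [hk]; exact Nat.ceil_lt_add_one (by positivity)
    have h2 : 512 * (t:ℝ) ^ 2 * W ≤ 512 * (5 * L) ^ 2 * (11 * L) := by gcongr
    have h3 : 1 ≤ L ^ 3 := one_le_pow₀ hL1
    linarith
  obtain ⟨V, hV, hdim⟩ := br_core A hA α hα hAα t k ht0 hk0 h2t (by
    have h1 : Real.exp (-((1 / (16 * t : ℝ)) ^ 2 / 2 * k)) ≤ Real.exp (-W) := by
      rw [Real.exp_le_exp, neg_le_neg_iff]
      have : (1 / (16 * t : ℝ)) ^ 2 / 2 * k = k / (512 * (t:ℝ) ^ 2) := by field_simp; norm_num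
      rw [this, le_div_iff₀ (by positivity)]
      linarith
    rw [Real.exp_neg W, hW, Real.exp_log (by positivity)] at h1
    calc _ ≤ 4 * (64 * (t:ℝ) / α)⁻¹ := by gcongr
      _ = _ := by field_simp; norm_num)
  refine ⟨V, hV, hdim.trans ?_⟩
  have h1 : Real.log (1 / α) ≤ L :=
    le_trans (Real.log_le_log (by positivity) (by gcongr; norm_num)) hlogL
  have h2 : k * Real.log (1 / α) ≤ (140801 * L ^ 3) * L := by
    refine mul_le_mul hk2 h1 (Real.log_nonneg ?_) (by positivity)
    rw [le_div_iff₀ hα]; linarith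
  have h3 : 1 ≤ L ^ 4 := one_le_pow₀ hL1
  have h4 : L ^ 3 * L = L ^ 4 := by ring
  linarith
end
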